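/- arXiv:2005.07603 — 2 statements merged into one kernel-verified Lean document; each statement's English description precedes it below -/
import Mathlib

section
/- Every morphism in the box category □ factors as a composite (∂_{k_1,ε_1} ⋯ ∂_{k_t,ε_t}) ∘ (γ_{j_1,δ_1} ⋯ γ_{j_s,δ_s}) ∘ (σ_{i_1} ⋯ σ_{i_r}) with 1 ≤ i_1 < ⋯ < i_r, 1 ≤ j_1 ≤ ⋯ ≤ j_s, and k_1 > ⋯ > k_t ≥ 1; and this factorization is unique if additionally δ_p ≠ δ_{p+1} whenever j_p = j_{p+1}. -/
/-- The poset `[1]^n = {0 ≤ 1}^n`, modeled as functions `Fin n → Bool`. -/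
def Cube (n : ℕ) : Type := Fin n → Bool

/-- The face map `∂_{i,ε} : [1]^n → [1]^(n+1)` inserting `ε` at position `i` (0-based). -/
def face {n : ℕ} (i : Fin (n + 1)) (ε : Bool) (x : Cube n) : Cube (n + 1) :=
  Fin.insertNth i ε x

/-- The degeneracy `σ_i : [1]^(n+1) → [1]^n` deleting coordinate `i` (0-based). -/
def degen {n : ℕ} (i : Fin (n + 1)) (x : Cube (n + 1)) : Cube n :=
  fun j => x (i.succAbove j)

/-- The connection `γ_{i,ε} : [1]^(n+2) → [1]^(n+1)` merging coordinates `i` and `i+1`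
(0-based), using `max` when `ε = true` and `min` when `ε = false`. -/
def conn {n : ℕ} (i : Fin (n + 1)) (ε : Bool) (x : Cube (n + 2)) : Cube (n + 1) :=
  fun j =>
    if j.val < i.val then x j.castSucc
    else if j.val = i.val then
      (if ε then x i.castSucc || x i.succ else x i.castSucc && x i.succ)
    else x j.succ

/-- The predicate on functions `[1]^m → [1]^n` of being a morphism of the box category `□`,
i.e. a composite of faces, degeneracies and connections. -/
inductive IsBoxMap : {m n : ℕ} → (Cube m → Cube n) → Prop
  | id {n : ℕ} : IsBoxMap (fun x : Cube n => x)
  | face {n : ℕ} (i : Fin (n + 1)) (ε : Bool) : IsBoxMap (face i ε)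
  | degen {n : ℕ} (i : Fin (n + 1)) : IsBoxMap (degen i)
  | conn {n : ℕ} (i : Fin (n + 1)) (ε : Bool) : IsBoxMap (conn i ε)
  | comp {m n k : ℕ} {f : Cube m → Cube n} {g : Cube n → Cube k} :
      IsBoxMap f → IsBoxMap g → IsBoxMap (g ∘ f)

/-- The face map with 1-based index `p` (as in the paper); out-of-range indices are clamped. -/
def face1 {n : ℕ} (p : ℕ) (ε : Bool) : Cube n → Cube (n + 1) :=
  face ⟨min (p - 1) n, by omega⟩ ε

/-- The degeneracy with 1-based index `p`; out-of-range indices are clamped. -/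
def degen1 {n : ℕ} (p : ℕ) : Cube (n + 1) → Cube n :=
  degen ⟨min (p - 1) n, by omega⟩

/-- The connection with 1-based index `p`; out-of-range indices are clamped. -/
def conn1 {n : ℕ} (p : ℕ) (ε : Bool) : Cube (n + 2) → Cube (n + 1) :=
  conn ⟨min (p - 1) n, by omega⟩ ε

theorem face1_isBoxMap {n : ℕ} (p : ℕ) (ε : Bool) : IsBoxMap (face1 (n := n) p ε) :=
  IsBoxMap.face _ _

theorem degen1_isBoxMap {n : ℕ} (p : ℕ) : IsBoxMap (degen1 (n := n) p) :=
  IsBoxMap.degen _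

/-- Transport a cube along an equality of dimensions. -/
def cubeCast {m n : ℕ} (h : m = n) (x : Cube m) : Cube n := fun j => x (Fin.cast h.symm j)

/-- The composite `σ_{i_1} ⋯ σ_{i_r}` of degeneracies (1-based indices, the head of the
list being the outermost, i.e. last applied, degeneracy), as a map `[1]^{n+r} → [1]^n`. -/
def sigmaWord : (l : List ℕ) → {n : ℕ} → Cube (n + l.length) → Cube n
  | [], _, x => x
  | p :: l, n, x => degen1 p (sigmaWord l (n := n + 1) (cubeCast (by simp only [List.length_cons]; omega) x))

/-- Validity of the 1-based indices in a word of degeneracies with codomain `[1]^n`. -/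
def sigmaValid : List ℕ → ℕ → Prop
  | [], _ => True
  | p :: l, n => 1 ≤ p ∧ p ≤ n + 1 ∧ sigmaValid l (n + 1)

/-- The composite `γ_{j_1,δ_1} ⋯ γ_{j_s,δ_s}` of connections (1-based indices, head of the
list outermost), as a map `[1]^{n+s} → [1]^n`. -/
def gammaWord : (l : List (ℕ × Bool)) → {n : ℕ} → Cube (n + l.length) → Cube n
  | [], _, x => x
  | (p, ε) :: l, n + 1, x => conn1 p ε (gammaWord l (n := n + 2) (cubeCast (by simp only [List.length_cons]; omega) x))
  | _ :: _, 0, _ => fun _ => false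

/-- Validity of the 1-based indices in a word of connections with codomain `[1]^n`. -/
def gammaValid : List (ℕ × Bool) → ℕ → Prop
  | [], _ => True
  | (p, _) :: l, n => 1 ≤ p ∧ p ≤ n ∧ gammaValid l (n + 1)

/-- The composite `∂_{k_1,ε_1} ⋯ ∂_{k_t,ε_t}` of faces (1-based indices, head of the
list outermost), as a map `[1]^n → [1]^{n+t}`. -/
def deltaWord : (l : List (ℕ × Bool)) → {n : ℕ} → Cube n → Cube (n + l.length)
  | [], _, x => x
  | (p, ε) :: l, n, x => cubeCast (by simp only [List.length_cons]; omega) (face1 p ε (deltaWord l x))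

/-- Validity of the 1-based indices in a word of faces with domain `[1]^n`. -/
def deltaValid : List (ℕ × Bool) → ℕ → Prop
  | [], _ => True
  | (p, _) :: l, n => 1 ≤ p ∧ p ≤ n + l.length + 1 ∧ deltaValid l n


namespace BoxNF

abbrev T := ℕ → Bool

def op (ε a b : Bool) : Bool := if ε then a || b else a && b

def D (p : ℕ) (ε : Bool) (x : T) : T :=
  fun j => if j < p then x j else if j = p then ε else x (j - 1)
def S (p : ℕ) (x : T) : T := fun j => if j < p then x j else x (j + 1)
def C (p : ℕ) (ε : Bool) (x : T) : T :=
  fun j => if j < p then x j else if j = p then op ε (x p) (x (p + 1)) else x (j + 1)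

def wD : List (ℕ × Bool) → T → T
  | [] => id
  | (p, ε) :: l => D p ε ∘ wD l
def wS : List ℕ → T → T
  | [] => id
  | p :: l => S p ∘ wS l
def wG : List (ℕ × Bool) → T → T
  | [] => id
  | (p, ε) :: l => C p ε ∘ wG l

/-- extension of a finite cube by an infinite tail -/
def E {n : ℕ} (x : Cube n) (y : T) : T :=
  fun j => if h : 1 ≤ j ∧ j ≤ n then x ⟨j - 1, by omega⟩ else y (j - n)

theorem E_cast {m n : ℕ} (h : m = n) (x : Cube m) (y : T) : E (cubeCast h x) y = E x y := by
  subst h; rfl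

theorem E_inj {n : ℕ} {x x' : Cube n} {y : T} (h : E x y = E x' y) : x = x' := by
  funext j
  have := congrFun h (j.val + 1)
  have hj := j.isLt
  simpa [E, hj, Nat.succ_le_iff] using this

theorem E_surj (n : ℕ) (z : T) : ∃ (x : Cube n) (y : T), E x y = z := by
  refine ⟨fun j => z (j.val + 1), fun j => if j = 0 then z 0 else z (j + n), ?_⟩
  funext j
  unfold E
  by_cases h : 1 ≤ j ∧ j ≤ n
  · simp [h]
  · rw [dif_neg h]
    by_cases h2 : j - n = 0
    · simp only [h2, if_true]; congr 1; omega
    · simp only [h2, if_false]; congr 1; omega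

theorem face_same {n : ℕ} (i : Fin (n + 1)) (ε : Bool) (x : Cube n) : face i ε x i = ε :=
  Fin.insertNth_apply_same (α := fun _ => Bool) i ε x
theorem face_above {n : ℕ} (i : Fin (n + 1)) (ε : Bool) (x : Cube n) (k : Fin n) :
    face i ε x (i.succAbove k) = x k :=
  Fin.insertNth_apply_succAbove (α := fun _ => Bool) i ε x k

theorem E_face {n : ℕ} (p : ℕ) (ε : Bool) (h1 : 1 ≤ p) (h2 : p ≤ n + 1) (x : Cube n) (y : T) :
    E (face1 p ε x) y = D p ε (E x y) := by
  funext j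
  by_cases h : 1 ≤ j ∧ j ≤ n + 1
  · have e : E (face1 p ε x) y j = face1 p ε x ⟨j - 1, by omega⟩ := by simp [E, h]
    rw [e]
    unfold face1
    rcases lt_trichotomy j p with hj | hj | hj
    · have : (⟨j - 1, by omega⟩ : Fin (n+1)) =
          (⟨min (p - 1) n, by omega⟩ : Fin (n+1)).succAbove ⟨j - 1, by omega⟩ := by
        rw [Fin.succAbove_of_castSucc_lt _ _ (by rw [Fin.lt_def]; simp; omega)]; rfl
      rw [this, face_above]
      have : 1 ≤ j ∧ j ≤ n := by omega
      simp [D, hj, E, this]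
    · subst hj
      have : (⟨j - 1, by omega⟩ : Fin (n+1)) = ⟨min (j - 1) n, by omega⟩ := by
        ext; simp; omega
      rw [this, face_same]
      simp [D]
    · have : (⟨j - 1, by omega⟩ : Fin (n+1)) =
          (⟨min (p - 1) n, by omega⟩ : Fin (n+1)).succAbove ⟨j - 1 - 1, by omega⟩ := by
        rw [Fin.succAbove_of_le_castSucc _ _ (by rw [Fin.le_def]; simp; omega)]
        ext; simp; omega
      rw [this, face_above]
      have h3 : ¬ j < p := by omega
      have h4 : j ≠ p := by omega
      have : 1 ≤ j - 1 ∧ j - 1 ≤ n := by omega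
      simp only [D, h3, h4, E, this, if_false]
      simp
  · rcases Nat.eq_zero_or_pos j with rfl | hj
    · simp [E, D, show 0 < p by omega]
    · have h3 : ¬ j < p := by omega
      have h4 : j ≠ p := by omega
      have h5 : ¬ (1 ≤ j - 1 ∧ j - 1 ≤ n) := by omega
      simp only [E, D, h3, h4, h, h5, dite_false, if_false]
      congr 1; omega

theorem E_degen {n : ℕ} (p : ℕ) (h1 : 1 ≤ p) (h2 : p ≤ n + 1) (x : Cube (n + 1)) (y : T) :
    E (degen1 p x) y = S p (E x y) := by
  funext j
  by_cases h : 1 ≤ j ∧ j ≤ n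
  · have e : E (degen1 p x) y j = degen1 p x ⟨j - 1, by omega⟩ := by simp [E, h]
    rw [e]
    unfold degen1 degen
    by_cases hj : j < p
    · rw [Fin.succAbove_of_castSucc_lt _ _ (by simp [Fin.lt_def]; omega)]
      have : 1 ≤ j ∧ j ≤ n + 1 := by omega
      simp [S, hj, E, this]
    · rw [Fin.succAbove_of_le_castSucc _ _ (by simp [Fin.le_def]; omega)]
      have : 1 ≤ j + 1 ∧ j + 1 ≤ n + 1 := by omega
      simp only [S, hj, E, this, if_false]
      simp
      congr 1; ext; simp; omega
  · rcases Nat.eq_zero_or_pos j with rfl | hj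
    · simp [E, S, show 0 < p by omega]
    · have h3 : ¬ j < p := by omega
      have h5 : ¬ (1 ≤ j + 1 ∧ j + 1 ≤ n + 1) := by omega
      simp only [E, S, h3, h, h5, dite_false, if_false]
      congr 1; omega

theorem E_conn {n : ℕ} (p : ℕ) (ε : Bool) (h1 : 1 ≤ p) (h2 : p ≤ n + 1) (x : Cube (n + 2))
    (y : T) : E (conn1 p ε x) y = C p ε (E x y) := by
  funext j
  have hm : min (p - 1) n = p - 1 := by omega
  by_cases h : 1 ≤ j ∧ j ≤ n + 1
  · have e : E (conn1 p ε x) y j = conn1 p ε x ⟨j - 1, by omega⟩ := by simp [E, h]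
    rw [e]
    unfold conn1 conn
    simp only [hm]
    rcases lt_trichotomy j p with hj | hj | hj
    · have : 1 ≤ j ∧ j ≤ n + 2 := by omega
      have h3 : j - 1 < p - 1 := by omega
      simp [C, hj, h3, E, this]
    · subst hj
      have h3 : 1 ≤ j ∧ j ≤ n + 2 := by omega
      have h4 : 1 ≤ j + 1 ∧ j + 1 ≤ n + 2 := by omega
      have h5 : j - 1 + 1 = j := by omega
      simp only [C, op, E, h3, h4, lt_irrefl, if_false, if_true]
      simp [h5]
    · have h3 : ¬ j < p := by omega
      have h4 : j ≠ p := by omega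
      have h6 : ¬ j - 1 < p - 1 := by omega
      have h7 : j - 1 ≠ p - 1 := by omega
      have : 1 ≤ j + 1 ∧ j + 1 ≤ n + 2 := by omega
      simp only [C, h3, h4, h6, h7, E, this, if_false]
      simp
      congr 1; ext; simp; omega
  · rcases Nat.eq_zero_or_pos j with rfl | hj
    · simp [E, C, show 0 < p by omega]
    · have h3 : ¬ j < p := by omega
      have h4 : j ≠ p := by omega
      have h5 : ¬ (1 ≤ j + 1 ∧ j + 1 ≤ n + 2) := by omega
      simp only [E, C, h3, h4, h, h5, dite_false, if_false]
      congr 1; omega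

theorem E_wD : ∀ (l : List (ℕ × Bool)) {n : ℕ} (x : Cube n) (y : T), deltaValid l n →
    E (deltaWord l x) y = wD l (E x y)
  | [], _, _, _, _ => rfl
  | (p, ε) :: l, n, x, y, h => by
    obtain ⟨h1, h2, h3⟩ := h
    rw [deltaWord, E_cast, E_face p ε h1 h2, E_wD l x y h3]; rfl

theorem E_wS : ∀ (l : List ℕ) {n : ℕ} (x : Cube (n + l.length)) (y : T), sigmaValid l n →
    E (sigmaWord l x) y = wS l (E x y)
  | [], _, _, _, _ => rfl
  | p :: l, n, x, y, h => by
    obtain ⟨h1, h2, h3⟩ := h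
    rw [sigmaWord, E_degen p h1 h2, E_wS l _ y h3, E_cast]; rfl

theorem E_wG : ∀ (l : List (ℕ × Bool)) {n : ℕ} (x : Cube (n + l.length)) (y : T),
    gammaValid l n → E (gammaWord l x) y = wG l (E x y)
  | [], _, _, _, _ => rfl
  | (p, ε) :: l, 0, x, y, h => by
    obtain ⟨h1, h2, h3⟩ := h
    omega
  | (p, ε) :: l, n + 1, x, y, h => by
    obtain ⟨h1, h2, h3⟩ := h
    rw [gammaWord, E_conn p ε h1 h2, E_wG l _ y h3, E_cast]; rfl

theorem E_all {m n : ℕ} {ls : List ℕ} {lg ld : List (ℕ × Bool)} {b : ℕ}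
    (h1 : m = (b + lg.length) + ls.length) (h2 : n = b + ld.length)
    (hs : sigmaValid ls (b + lg.length)) (hg : gammaValid lg b) (hd : deltaValid ld b)
    (x : Cube m) (y : T) :
    E (cubeCast h2.symm (deltaWord ld (gammaWord lg (sigmaWord ls (cubeCast h1 x))))) y =
      wD ld (wG lg (wS ls (E x y))) := by
  rw [E_cast, E_wD _ _ _ hd, E_wG _ _ _ hg, E_wS _ _ _ hs, E_cast]


/-! Existence. -/

theorem op_absl (ε b : Bool) : op ε ε b = ε := by cases ε <;> cases b <;> rfl
theorem op_absr (ε b : Bool) : op ε b ε = ε := by cases ε <;> cases b <;> rfl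
theorem op_neul (ε b : Bool) : op ε (!ε) b = b := by cases ε <;> cases b <;> rfl
theorem op_neur (ε b : Bool) : op ε b (!ε) = b := by cases ε <;> cases b <;> rfl
theorem op_assoc (ε a b c : Bool) : op ε (op ε a b) c = op ε a (op ε b c) := by
  cases ε <;> cases b <;> cases a <;> cases c <;> rfl
theorem op_eq_neu {ε a b : Bool} (h : op ε a b = !ε) : a = (!ε) ∧ b = (!ε) := by
  revert h; cases ε <;> cases b <;> cases a <;> decide

theorem DD {p q : ℕ} (ε δ : Bool) (h : p ≤ q) : D p ε ∘ D q δ = D (q + 1) δ ∘ D p ε := by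
  funext x j; simp only [Function.comp, D]; grind
theorem SS {p q : ℕ} (h : q ≤ p) : S p ∘ S q = S q ∘ S (p + 1) := by
  funext x j; simp only [Function.comp, S]; grind
theorem CC {p q : ℕ} (ε δ : Bool) (h : q < p) : C p ε ∘ C q δ = C q δ ∘ C (p + 1) ε := by
  funext x j; simp only [Function.comp, C]; grind
theorem CC_same (p : ℕ) (ε : Bool) : C p ε ∘ C p ε = C p ε ∘ C (p + 1) ε := by
  funext x j
  rcases lt_trichotomy j p with h | h | h
  · simp [C, h, show j < p + 1 by omega]
  · subst h; simp [C, op_assoc]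
  · simp only [Function.comp, C]; grind
theorem SC_lt {p q : ℕ} (ε : Bool) (h : p < q) : S p ∘ C q ε = C (q - 1) ε ∘ S p := by
  funext x j; simp only [Function.comp, C, S]; grind
theorem SC_gt {p q : ℕ} (ε : Bool) (h : q < p) : S p ∘ C q ε = C q ε ∘ S (p + 1) := by
  funext x j; simp only [Function.comp, C, S]; grind
theorem SC_eq (p : ℕ) (ε : Bool) : S p ∘ C p ε = S p ∘ S p := by
  funext x j; simp only [Function.comp, C, S]; grind
theorem SD_lt {p q : ℕ} (ε : Bool) (h : p < q) : S p ∘ D q ε = D (q - 1) ε ∘ S p := by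
  funext x j; simp only [Function.comp, D, S]; grind
theorem SD_gt {p q : ℕ} (ε : Bool) (h : q < p) : S p ∘ D q ε = D q ε ∘ S (p - 1) := by
  funext x j; simp only [Function.comp, D, S]; grind
theorem SD_eq (p : ℕ) (ε : Bool) : S p ∘ D p ε = id := by
  funext x j; simp only [Function.comp, D, S, id]; grind
theorem CD_lt {p q : ℕ} (ε δ : Bool) (h : q < p) : C p ε ∘ D q δ = D q δ ∘ C (p - 1) ε := by
  funext x j; simp only [Function.comp, D, C]; grind
theorem CD_gt {p q : ℕ} (ε δ : Bool) (h : p + 1 < q) : C p ε ∘ D q δ = D (q - 1) δ ∘ C p ε := by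
  funext x j; simp only [Function.comp, D, C]; grind
theorem CD_abs1 (p : ℕ) (ε : Bool) : C p ε ∘ D p ε = D p ε ∘ S p := by
  funext x j; simp only [Function.comp, D, C, S]; grind [op_absl]
theorem CD_abs2 (p : ℕ) (ε : Bool) : C p ε ∘ D (p + 1) ε = D p ε ∘ S p := by
  funext x j; simp only [Function.comp, D, C, S]; grind [op_absr]
theorem CD_neu1 (p : ℕ) (ε : Bool) : C p ε ∘ D p (!ε) = id := by
  funext x j; simp only [Function.comp, D, C, id]; grind [op_neul]
theorem CD_neu2 (p : ℕ) (ε : Bool) : C p ε ∘ D (p + 1) (!ε) = id := by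
  funext x j; simp only [Function.comp, D, C, id]; grind [op_neur]

inductive PD : ℕ → ℕ → (T → T) → Prop
  | id (a : ℕ) : PD a a id
  | cons {a c : ℕ} {F : T → T} (p : ℕ) (ε : Bool) : PD a c F → 1 ≤ p → p ≤ c + 1 →
      PD a (c + 1) (D p ε ∘ F)
inductive PS : ℕ → ℕ → (T → T) → Prop
  | id (a : ℕ) : PS a a id
  | cons {a c : ℕ} {F : T → T} (p : ℕ) : PS a (c + 1) F → 1 ≤ p → p ≤ c + 1 →
      PS a c (S p ∘ F)
inductive PG : ℕ → ℕ → (T → T) → Prop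
  | id (a : ℕ) : PG a a id
  | cons {a c : ℕ} {F : T → T} (p : ℕ) (ε : Bool) : PG a (c + 1) F → 1 ≤ p → p ≤ c →
      PG a c (C p ε ∘ F)

theorem PS.trans {a b c : ℕ} {F G : T → T} (h : PS a b F) (h' : PS b c G) : PS a c (G ∘ F) := by
  induction h' with
  | id => exact h
  | cons p _ h1 h2 ih => exact PS.cons p ih h1 h2

theorem S_PG : ∀ (N a c : ℕ) (F : T → T) (p : ℕ), PG a (c + 1) F → a ≤ c + 1 + N → 1 ≤ p →
    p ≤ c + 1 → ∃ b G' S', PG b c G' ∧ PS a b S' ∧ b < a ∧ S p ∘ F = G' ∘ S' := by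
  intro N
  induction N with
  | zero =>
    intro a c F p h hN h1 h2
    have key : ∀ {a c : ℕ} {F : T → T}, PG a c F → c ≤ a := by
      intro a c F h; induction h <;> omega
    cases h with
    | id => exact ⟨c, id, S p, PG.id c, PS.cons p (PS.id _) h1 h2, by omega, rfl⟩
    | cons q ε h => have := key h; omega
  | succ N ih =>
    intro a c F p h hN h1 h2
    cases h with
    | id => exact ⟨c, id, S p, PG.id c, PS.cons p (PS.id _) h1 h2, by omega, rfl⟩
    | @cons _ F q ε h hq1 hq2 =>
      rcases lt_trichotomy p q with hpq | hpq | hpq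
      · obtain ⟨b, G', S', hG, hS, hb, e⟩ := ih a (c + 1) F p h (by omega) h1 (by omega)
        refine ⟨b, C (q - 1) ε ∘ G', S', PG.cons _ _ hG (by omega) (by omega), hS, hb, ?_⟩
        rw [← Function.comp_assoc, SC_lt ε hpq, Function.comp_assoc, e]; rfl
      · subst hpq
        obtain ⟨b, G', S', hG, hS, hb, e⟩ := ih a (c + 1) F p h (by omega) h1 (by omega)
        obtain ⟨b2, G2, S2, hG2, hS2, hb2, e2⟩ := ih b c G' p hG (by omega) h1 (by omega)
        refine ⟨b2, G2, S2 ∘ S', hG2, hS.trans hS2, by omega, ?_⟩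
        rw [← Function.comp_assoc, SC_eq, Function.comp_assoc, e, ← Function.comp_assoc, e2]; rfl
      · obtain ⟨b, G', S', hG, hS, hb, e⟩ := ih a (c + 1) F (p + 1) h (by omega) (by omega) (by omega)
        refine ⟨b, C q ε ∘ G', S', PG.cons _ _ hG (by omega) (by omega), hS, hb, ?_⟩
        rw [← Function.comp_assoc, SC_gt ε hpq, Function.comp_assoc, e]; rfl

def Q (m n : ℕ) (F : T → T) : Prop :=
  ∃ (a b : ℕ) (s g d : T → T), PS m a s ∧ PG a b g ∧ PD b n d ∧ F = d ∘ g ∘ s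

theorem Q_D {m n : ℕ} {F : T → T} (p : ℕ) (ε : Bool) (h : Q m n F) (h1 : 1 ≤ p)
    (h2 : p ≤ n + 1) : Q m (n + 1) (D p ε ∘ F) := by
  obtain ⟨a, b, s, g, d, hs, hg, hd, rfl⟩ := h
  exact ⟨a, b, s, g, D p ε ∘ d, hs, hg, PD.cons p ε hd h1 h2, rfl⟩

theorem Q_S_aux {m a b n : ℕ} {s g d : T → T} (hs : PS m a s) (hg : PG a b g) (hd : PD b n d) :
    ∀ (k p : ℕ), n = k + 1 → 1 ≤ p → p ≤ k + 1 → Q m k (S p ∘ d ∘ g ∘ s) := by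
  induction hd with
  | id =>
    rintro k p rfl h1 h2
    obtain ⟨b, G', S', hG, hS, hb, e⟩ := S_PG a a k g p hg (by omega) h1 h2
    refine ⟨b, k, S' ∘ s, G', id, hs.trans hS, hG, PD.id _, ?_⟩
    simp only [Function.id_comp]
    rw [← Function.comp_assoc, e]; rfl
  | @cons c d q ε hd hq1 hq2 ih =>
    rintro k p hk h1 h2
    obtain rfl : c = k := by omega
    rcases lt_trichotomy p q with hpq | hpq | hpq
    · obtain ⟨c, rfl⟩ : ∃ c', c = c' + 1 := ⟨c - 1, by omega⟩
      change Q _ _ ((S p ∘ D _ ε) ∘ (d ∘ g ∘ s))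
      rw [SD_lt ε hpq]
      exact Q_D _ _ (ih c p rfl h1 (by omega)) (by omega) (by omega)
    · subst hpq
      change Q _ _ ((S p ∘ D _ ε) ∘ (d ∘ g ∘ s))
      rw [SD_eq]
      exact ⟨a, b, s, g, d, hs, hg, hd, rfl⟩
    · obtain ⟨c, rfl⟩ : ∃ c', c = c' + 1 := ⟨c - 1, by omega⟩
      change Q _ _ ((S p ∘ D _ ε) ∘ (d ∘ g ∘ s))
      rw [SD_gt ε hpq]
      exact Q_D _ _ (ih c (p - 1) rfl (by omega) (by omega)) (by omega) (by omega)

theorem Q_S {m n : ℕ} {F : T → T} (p : ℕ) (h : Q m (n + 1) F) (h1 : 1 ≤ p)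
    (h2 : p ≤ n + 1) : Q m n (S p ∘ F) := by
  obtain ⟨a, b, s, g, d, hs, hg, hd, rfl⟩ := h
  exact Q_S_aux hs hg hd n p rfl h1 h2

theorem Q_C_aux {m a b n : ℕ} {s g d : T → T} (hs : PS m a s) (hg : PG a b g) (hd : PD b n d) :
    ∀ (k p : ℕ) (δ : Bool), n = k + 1 → 1 ≤ p → p ≤ k → Q m k (C p δ ∘ d ∘ g ∘ s) := by
  induction hd with
  | id =>
    rintro k p δ rfl h1 h2
    exact ⟨a, k, s, C p δ ∘ g, id, hs, PG.cons p δ hg h1 h2, PD.id _, rfl⟩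
  | @cons c d q ε hd hq1 hq2 ih =>
    rintro k p δ hk h1 h2
    obtain rfl : c = k := by omega
    obtain ⟨c, rfl⟩ : ∃ c', c = c' + 1 := ⟨c - 1, by omega⟩
    change Q _ _ ((C p δ ∘ D q ε) ∘ (d ∘ g ∘ s))
    have hq : Q m (c + 1) (d ∘ g ∘ s) := ⟨a, b, s, g, d, hs, hg, hd, rfl⟩
    rcases lt_trichotomy q p with hpq | hpq | hpq
    · rw [CD_lt _ _ hpq]
      exact Q_D _ _ (ih c (p - 1) δ rfl (by omega) (by omega)) (by omega) (by omega)
    · subst hpq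
      by_cases he : ε = δ
      · subst he
        rw [CD_abs1]
        exact Q_D _ _ (Q_S _ hq h1 h2) h1 h2
      · obtain rfl : ε = !δ := by cases ε <;> cases δ <;> simp_all
        rw [CD_neu1]; exact hq
    · rcases Nat.eq_or_lt_of_le (show p + 1 ≤ q by omega) with hpq | hpq
      · subst hpq
        by_cases he : ε = δ
        · subst he
          rw [CD_abs2]
          exact Q_D _ _ (Q_S _ hq h1 h2) h1 h2
        · obtain rfl : ε = !δ := by cases ε <;> cases δ <;> simp_all
          rw [CD_neu2]; exact hq
      · rw [CD_gt _ _ hpq]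
        exact Q_D _ _ (ih c p δ rfl (by omega) (by omega)) (by omega) (by omega)

theorem Q_C {m n : ℕ} {F : T → T} (p : ℕ) (δ : Bool) (h : Q m (n + 1) F) (h1 : 1 ≤ p)
    (h2 : p ≤ n) : Q m n (C p δ ∘ F) := by
  obtain ⟨a, b, s, g, d, hs, hg, hd, rfl⟩ := h
  exact Q_C_aux hs hg hd n p δ rfl h1 h2

theorem Q_id (m : ℕ) : Q m m id := ⟨m, m, id, id, id, PS.id _, PG.id _, PD.id _, rfl⟩

theorem Q_comp {m n k : ℕ} {F G : T → T} (hF : Q m n F) (hG : Q n k G) : Q m k (G ∘ F) := by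
  obtain ⟨a, b, s, g, d, hs, hg, hd, rfl⟩ := hG
  have h1 : Q m a (s ∘ F) := by
    clear hg hd
    induction hs with
    | id => exact hF
    | cons p _ h1 h2 ih => exact Q_S p ih h1 h2
  have h2 : Q m b (g ∘ s ∘ F) := by
    clear hd
    induction hg with
    | id => exact h1
    | cons p ε _ h1' h2 ih => exact Q_C p ε ih h1' h2
  have h3 : Q m k (d ∘ g ∘ s ∘ F) := by
    clear hF
    induction hd with
    | id => exact h2
    | cons p ε _ h1' h2' ih => exact Q_D p ε ih h1' h2'
  exact h3

theorem clampFin {n : ℕ} (i : Fin (n + 1)) (h : min (i.val + 1 - 1) n < n + 1) :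
    (⟨min (i.val + 1 - 1) n, h⟩ : Fin (n + 1)) = i := by
  apply Fin.ext; show min (i.val + 1 - 1) n = i.val; omega

theorem box_Q {m n : ℕ} {f : Cube m → Cube n} (hf : IsBoxMap f) :
    ∃ F, Q m n F ∧ ∀ x y, E (f x) y = F (E x y) := by
  induction hf with
  | id => exact ⟨id, Q_id _, fun _ _ => rfl⟩
  | @face n i ε =>
    refine ⟨_, Q_D (i.val + 1) ε (Q_id n) (by omega) (by omega), fun x y => ?_⟩
    have := E_face (i.val + 1) ε (by omega) (by omega) x y
    rw [show face i ε = face1 (i.val + 1) ε by unfold face1; rw [clampFin i]]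
    exact this
  | @degen n i =>
    refine ⟨_, Q_S (i.val + 1) (Q_id (n + 1)) (by omega) (by omega), fun x y => ?_⟩
    have := E_degen (i.val + 1) (by omega) (by omega) x y
    rw [show degen i = degen1 (i.val + 1) by unfold degen1; rw [clampFin i]]
    exact this
  | @conn n i ε =>
    refine ⟨_, Q_C (i.val + 1) ε (Q_id (n + 2)) (by omega) (by omega), fun x y => ?_⟩
    have := E_conn (i.val + 1) ε (by omega) (by omega) x y
    rw [show conn i ε = conn1 (i.val + 1) ε by unfold conn1; rw [clampFin i]]
    exact this
  | comp _ _ ih1 ih2 =>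
    obtain ⟨F, hF, h1⟩ := ih1
    obtain ⟨G, hG, h2⟩ := ih2
    exact ⟨G ∘ F, Q_comp hF hG, fun x y => by simp [h1, h2]⟩

/-! Sorting. -/

theorem insD : ∀ (l : List (ℕ × Bool)) (a p : ℕ) (ε : Bool), (l.map Prod.fst).Pairwise (· > ·) →
    deltaValid l a → 1 ≤ p → p ≤ a + l.length + 1 →
    ∃ l', l'.length = l.length + 1 ∧ deltaValid l' a ∧ (l'.map Prod.fst).Pairwise (· > ·) ∧
      wD l' = D p ε ∘ wD l ∧
      ∀ B, p < B → (∀ x ∈ l, x.1 + 1 < B) → ∀ x ∈ l', x.1 < B := by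
  intro l
  induction l with
  | nil =>
    intro a p ε _ _ h1 h2
    exact ⟨[(p, ε)], rfl, ⟨h1, h2, trivial⟩, by simp, rfl, by simp⟩
  | cons hd l ih =>
    obtain ⟨q, δ⟩ := hd
    intro a p ε hp hv h1 h2
    by_cases hpq : q < p
    · refine ⟨(p, ε) :: (q, δ) :: l, rfl, ⟨h1, h2, hv⟩, ?_, rfl, ?_⟩
      · simp only [List.map_cons, List.pairwise_cons] at hp ⊢
        refine ⟨?_, hp⟩
        intro x hx
        rcases List.mem_cons.1 hx with rfl | hx
        · exact hpq
        · have := hp.1 x hx; omega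
      · intro B hB hx x hx'
        rcases List.mem_cons.1 hx' with rfl | hx'
        · exact hB
        · have := hx x hx'; omega
    · obtain ⟨v1, v2, v3⟩ := hv
      simp only [List.map_cons, List.pairwise_cons] at hp
      simp only [List.length_cons] at h2
      obtain ⟨l', e1, e2, e3, e4, e5⟩ := ih a p ε hp.2 v3 h1 (by omega)
      refine ⟨(q + 1, δ) :: l', by simp [e1], ⟨by omega, by omega, e2⟩, ?_, ?_, ?_⟩
      · simp only [List.map_cons, List.pairwise_cons]
        refine ⟨?_, e3⟩
        intro x hx
        obtain ⟨y, hy, rfl⟩ := List.mem_map.1 hx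
        refine e5 (q + 1) (by omega) ?_ y hy
        intro z hz
        have := hp.1 z.1 (List.mem_map_of_mem hz)
        omega
      · simp only [wD]
        rw [e4, ← Function.comp_assoc, ← Function.comp_assoc, DD ε δ (show p ≤ q by omega)]
      · intro B hB hx x hx'
        rcases List.mem_cons.1 hx' with rfl | hx'
        · exact hx (q, δ) (by simp)
        · exact e5 B hB (fun x h => hx x (by simp [h])) x hx'

theorem sortD {a c : ℕ} {F : T → T} (h : PD a c F) : ∃ l, c = a + l.length ∧ deltaValid l a ∧
    (l.map Prod.fst).Pairwise (· > ·) ∧ F = wD l := by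
  induction h with
  | id => exact ⟨[], rfl, trivial, by simp, rfl⟩
  | cons p ε _ h1 h2 ih =>
    obtain ⟨l, e1, e2, e3, rfl⟩ := ih
    obtain ⟨l', g1, g2, g3, g4, -⟩ := insD l _ p ε e3 e2 h1 (by omega)
    exact ⟨l', by omega, g2, g3, g4.symm⟩

theorem insS : ∀ (l : List ℕ) (c p : ℕ), l.Pairwise (· < ·) →
    sigmaValid l (c + 1) → 1 ≤ p → p ≤ c + 1 →
    ∃ l', l'.length = l.length + 1 ∧ sigmaValid l' c ∧ l'.Pairwise (· < ·) ∧
      wS l' = S p ∘ wS l ∧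
      ∀ B, B ≤ p → (∀ x ∈ l, B ≤ x) → ∀ x ∈ l', B ≤ x := by
  intro l
  induction l with
  | nil =>
    intro c p _ _ h1 h2
    exact ⟨[p], rfl, ⟨h1, h2, trivial⟩, by simp, rfl, by simp⟩
  | cons q l ih =>
    intro c p hp hv h1 h2
    by_cases hpq : p < q
    · refine ⟨p :: q :: l, rfl, ⟨h1, h2, hv⟩, ?_, rfl, ?_⟩
      · refine List.pairwise_cons.2 ⟨?_, hp⟩
        intro x hx
        rcases List.mem_cons.1 hx with rfl | hx
        · exact hpq
        · have := (List.pairwise_cons.1 hp).1 x hx; omega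
      · intro B hB hx x hx'
        rcases List.mem_cons.1 hx' with rfl | hx'
        · exact hB
        · exact hx x hx'
    · obtain ⟨v1, v2, v3⟩ := hv
      simp only [List.pairwise_cons] at hp
      obtain ⟨l', e1, e2, e3, e4, e5⟩ := ih (c + 1) (p + 1) hp.2 v3 (by omega) (by omega)
      refine ⟨q :: l', by simp [e1], ⟨by omega, by omega, e2⟩, ?_, ?_, ?_⟩
      · simp only [List.pairwise_cons]
        refine ⟨?_, e3⟩
        exact e5 (q + 1) (by omega) hp.1
      · simp only [wS]
        rw [e4, ← Function.comp_assoc, ← Function.comp_assoc, SS (show q ≤ p by omega)]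
      · intro B hB hx x hx'
        rcases List.mem_cons.1 hx' with rfl | hx'
        · exact hx x (by simp)
        · exact e5 B (by omega) (fun x h => hx x (by simp [h])) x hx'

theorem sortS {a c : ℕ} {F : T → T} (h : PS a c F) : ∃ l, a = c + l.length ∧ sigmaValid l c ∧
    l.Pairwise (· < ·) ∧ F = wS l := by
  induction h with
  | id => exact ⟨[], rfl, trivial, by simp, rfl⟩
  | cons p _ h1 h2 ih =>
    obtain ⟨l, e1, e2, e3, rfl⟩ := ih
    obtain ⟨l', g1, g2, g3, g4, -⟩ := insS l _ p e3 e2 h1 (by omega)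
    exact ⟨l', by omega, g2, g3, g4.symm⟩

def R (a b : ℕ × Bool) : Prop := a.1 < b.1 ∨ (a.1 = b.1 ∧ a.2 ≠ b.2)

theorem insG : ∀ (l : List (ℕ × Bool)) (c p : ℕ) (ε : Bool), l.IsChain R →
    gammaValid l (c + 1) → 1 ≤ p → p ≤ c →
    ∃ l', l'.length = l.length + 1 ∧ gammaValid l' c ∧ l'.IsChain R ∧
      wG l' = C p ε ∘ wG l ∧
      ∀ a, R a (p, ε) → (a :: l).IsChain R → (a :: l').IsChain R := by
  intro l
  induction l with
  | nil =>
    intro c p ε _ _ h1 h2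
    exact ⟨[(p, ε)], rfl, ⟨h1, h2, trivial⟩, by simp, rfl, by simp⟩
  | cons hd l ih =>
    obtain ⟨q, δ⟩ := hd
    intro c p ε hp hv h1 h2
    by_cases hpq : R (p, ε) (q, δ)
    · refine ⟨(p, ε) :: (q, δ) :: l, rfl, ⟨h1, h2, hv⟩, ?_, rfl, ?_⟩
      · exact List.isChain_cons_cons.2 ⟨hpq, hp⟩
      · intro a ha _
        exact List.isChain_cons_cons.2 ⟨ha, List.isChain_cons_cons.2 ⟨hpq, hp⟩⟩
    · obtain ⟨v1, v2, v3⟩ := hv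
      have hh : q < p ∨ (q = p ∧ δ = ε) := by
        unfold R at hpq; grind
      have hqp : q ≤ p := by omega
      obtain ⟨l', e1, e2, e3, e4, e5⟩ := ih (c + 1) (p + 1) ε hp.tail v3 (by omega) (by omega)
      have h6 : ((q, δ) :: l').IsChain R := e5 (q, δ) (Or.inl (by simp; omega)) hp
      refine ⟨(q, δ) :: l', by simp [e1], ⟨by omega, by omega, e2⟩, h6, ?_, ?_⟩
      · simp only [wG]
        rw [e4, ← Function.comp_assoc, ← Function.comp_assoc]
        rcases hh with hh | ⟨rfl, rfl⟩
        · rw [CC _ _ hh]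
        · rw [CC_same]
      · intro a ha hc
        exact List.isChain_cons_cons.2 ⟨(List.isChain_cons_cons.1 hc).1, h6⟩

theorem sortG {a c : ℕ} {F : T → T} (h : PG a c F) : ∃ l, a = c + l.length ∧ gammaValid l c ∧
    l.IsChain R ∧ F = wG l := by
  induction h with
  | id => exact ⟨[], rfl, trivial, by simp, rfl⟩
  | cons p ε _ h1 h2 ih =>
    obtain ⟨l, e1, e2, e3, rfl⟩ := ih
    obtain ⟨l', g1, g2, g3, g4, -⟩ := insG l _ p ε e3 e2 h1 (by omega)
    exact ⟨l', by omega, g2, g3, g4.symm⟩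


/-! Uniqueness. -/

theorem wD_coord : ∀ (l : List (ℕ × Bool)), (l.map Prod.fst).Pairwise (· > ·) → ∀ k,
    (∃ ε, (k, ε) ∈ l ∧ ∀ x, wD l x k = ε) ∨ (k ∉ l.map Prod.fst ∧ ∃ i, ∀ x, wD l x k = x i) := by
  intro l
  induction l with
  | nil => intro _ k; exact Or.inr ⟨by simp, k, fun _ => rfl⟩
  | cons hd l ih =>
    obtain ⟨p, ε⟩ := hd
    intro h k
    simp only [List.map_cons, List.pairwise_cons] at h
    rcases lt_trichotomy k p with hk | hk | hk
    · rcases ih h.2 k with ⟨δ, h1, h2⟩ | ⟨h1, i, h2⟩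
      · exact Or.inl ⟨δ, by simp [h1], fun x => by simp [wD, D, hk, h2]⟩
      · refine Or.inr ⟨?_, i, fun x => by simp [wD, D, hk, h2]⟩
        simp only [List.map_cons, List.mem_cons, not_or]
        exact ⟨by omega, h1⟩
    · subst hk
      exact Or.inl ⟨ε, by simp, fun x => by simp [wD, D]⟩
    · have h3 : ¬ k < p := by omega
      have h4 : k ≠ p := by omega
      rcases ih h.2 (k - 1) with ⟨δ, h1, h2⟩ | ⟨h1, i, h2⟩
      · have := h.1 (k - 1) (List.mem_map_of_mem h1)
        omega
      · refine Or.inr ⟨?_, i, fun x => by simp [wD, D, h3, h4, h2]⟩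
        simp only [List.map_cons, List.mem_cons, not_or]
        refine ⟨h4, fun hm => ?_⟩
        have := h.1 k hm
        omega

theorem wD_mem {l : List (ℕ × Bool)} (h : (l.map Prod.fst).Pairwise (· > ·)) {H : T → T}
    (hH : Function.Surjective H) (k : ℕ) (ε : Bool) :
    (k, ε) ∈ l ↔ ∀ z, wD l (H z) k = ε := by
  rcases wD_coord l h k with ⟨δ, h1, h2⟩ | ⟨h1, i, h2⟩
  · constructor
    · intro hm z
      rw [h2]
      have hn : l.Pairwise (fun a b => a.1 > b.1) := List.pairwise_map.1 h
      by_contra hne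
      have hne' : (k, δ) ≠ (k, ε) := by simpa using hne
      have hn' : l.Pairwise (fun a b => a.1 ≠ b.1) := hn.imp (fun {a b} hab => by omega)
      haveI : Std.Symm (fun a b : ℕ × Bool => a.1 ≠ b.1) := ⟨fun a b h => Ne.symm h⟩
      exact hn'.forall h1 hm hne' rfl
    · intro hz
      have := hz (fun _ => true)
      rw [h2] at this
      rwa [← this]
  · constructor
    · intro hm; exact absurd (List.mem_map_of_mem hm) h1
    · intro hz
      obtain ⟨z, hz'⟩ := hH (fun _ => !ε)
      have := hz z
      rw [h2, hz'] at this
      simp at this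

theorem D_inj (p : ℕ) (ε : Bool) : Function.Injective (D p ε) := by
  intro x y h
  have h2 : S p (D p ε x) = S p (D p ε y) := by rw [h]
  simpa using (congrFun (SD_eq p ε) x).symm.trans (h2.trans (congrFun (SD_eq p ε) y))

theorem wD_inj : ∀ l, Function.Injective (wD l)
  | [] => Function.injective_id
  | (p, ε) :: l => (D_inj p ε).comp (wD_inj l)

theorem wD_unique {l l' : List (ℕ × Bool)} (h : (l.map Prod.fst).Pairwise (· > ·))
    (h' : (l'.map Prod.fst).Pairwise (· > ·)) {H H' : T → T}
    (hH : Function.Surjective H) (hH' : Function.Surjective H')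
    (e : ∀ z, wD l (H z) = wD l' (H' z)) : l = l' ∧ H = H' := by
  have hm : ∀ x : ℕ × Bool, x ∈ l ↔ x ∈ l' := by
    rintro ⟨k, ε⟩
    rw [wD_mem h hH, wD_mem h' hH']
    simp only [e]
  have hl : l = l' := by
    have p1 : l.Pairwise (fun a b => a.1 > b.1) := List.pairwise_map.1 h
    have p2 : l'.Pairwise (fun a b => a.1 > b.1) := List.pairwise_map.1 h'
    have n1 : l.Nodup := p1.imp (fun {a b} hab hc => by subst hc; simp at hab)
    have n2 : l'.Nodup := p2.imp (fun {a b} hab hc => by subst hc; simp at hab)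
    have pm : l.Perm l' := (List.perm_ext_iff_of_nodup n1 n2).2 hm
    exact pm.eq_of_pairwise (fun a b _ _ h1 h2 => by exfalso; omega) p1 p2
  subst hl
  exact ⟨rfl, funext fun z => wD_inj l (e z)⟩

/-! Degeneracies. -/

def phi : List ℕ → ℕ → ℕ
  | [], k => k
  | p :: l, k => phi l (if k < p then k else k + 1)

theorem wS_phi : ∀ l z k, wS l z k = z (phi l k)
  | [], _, _ => rfl
  | p :: l, z, k => by
    simp only [wS, Function.comp, S, phi]
    split_ifs <;> rw [wS_phi l]

theorem phi_inj : ∀ l, Function.Injective (phi l)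
  | [] => Function.injective_id
  | p :: l => by
    intro a b h
    have := phi_inj l h
    split_ifs at this <;> omega

theorem phi_fix : ∀ l k, (∀ x ∈ l, k < x) → phi l k = k
  | [], _, _ => rfl
  | p :: l, k, h => by
    have := h p (by simp)
    simp only [phi, this, if_true]
    exact phi_fix l k (fun x hx => h x (by simp [hx]))

theorem phi_range : ∀ l, l.Pairwise (· < ·) → ∀ k, (∃ j, phi l j = k) ↔ k ∉ l
  | [], _, k => by simp [phi]
  | p :: l, h, k => by
    obtain ⟨h1, h2⟩ := List.pairwise_cons.1 h
    have hf := phi_fix l p h1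
    simp only [List.mem_cons, not_or, ← phi_range l h2 k]
    constructor
    · rintro ⟨j, rfl⟩
      refine ⟨fun hc => ?_, _, rfl⟩
      have := phi_inj l (hc.trans hf.symm)
      split_ifs at this <;> omega
    · rintro ⟨hne, j, rfl⟩
      have hj : j ≠ p := fun hc => hne (by rw [hc, hf])
      by_cases hjp : j < p
      · exact ⟨j, by simp [phi, hjp]⟩
      · refine ⟨j - 1, ?_⟩
        have h3 : ¬ (j - 1 < p) := by omega
        simp only [phi, h3, if_false]
        congr 1; omega

theorem wS_surj (l : List ℕ) : Function.Surjective (wS l) := by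
  classical
  intro w
  refine ⟨fun i => if h : ∃ j, phi l j = i then w h.choose else true, ?_⟩
  funext k
  rw [wS_phi]
  have h : ∃ j, phi l j = phi l k := ⟨k, rfl⟩
  simp only [h, dite_true]
  rw [phi_inj l h.choose_spec]

/-! Connections. -/

def tp (p i : ℕ) : ℕ := if i ≤ p then i else i - 1
def tau : List (ℕ × Bool) → ℕ → ℕ
  | [], i => i
  | (p, _) :: l, i => tp p (tau l i)

theorem tp_mono (p : ℕ) : Monotone (tp p) := by
  intro a b h; unfold tp; split_ifs <;> omega
theorem tau_mono : ∀ l, Monotone (tau l)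
  | [] => fun _ _ h => h
  | (p, _) :: l => (tp_mono p).comp (tau_mono l)

theorem tau_surj : ∀ l, Function.Surjective (tau l)
  | [] => fun k => ⟨k, rfl⟩
  | (p, _) :: l => by
    intro k
    by_cases h : k ≤ p
    · obtain ⟨i, hi⟩ := tau_surj l k
      exact ⟨i, by simp [tau, hi, tp, h]⟩
    · obtain ⟨i, hi⟩ := tau_surj l (k + 1)
      exact ⟨i, by simp [tau, hi, tp]; omega⟩

theorem wG_dep : ∀ l k z z', (∀ i, tau l i = k → z i = z' i) → wG l z k = wG l z' k
  | [], k, z, z', h => h k rfl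
  | (p, ε) :: l, k, z, z', h => by
    simp only [wG, Function.comp, C]
    have key : ∀ k', tp p k' = k → wG l z k' = wG l z' k' := fun k' hk' =>
      wG_dep l k' z z' (fun i hi => h i (by simp [tau, hi, hk']))
    split_ifs with h1 h2
    · exact key k (by unfold tp; split_ifs <;> omega)
    · rw [key p (by unfold tp; split_ifs <;> omega),
        key (p + 1) (by unfold tp; split_ifs <;> omega)]
    · exact key (k + 1) (by unfold tp; split_ifs <;> omega)

theorem C_P (p : ℕ) (ε : Bool) (i : ℕ) (w : T) :
    ∃ z : T, ∀ b, C p ε (Function.update z i b) = Function.update w (tp p i) b := by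
  by_cases hi : i ≤ p
  · refine ⟨D (p + 1) (!ε) w, fun b => ?_⟩
    have : Function.update (D (p + 1) (!ε) w) i b = D (p + 1) (!ε) (Function.update w i b) := by
      funext j; simp only [Function.update_apply, D]; grind
    rw [this]
    have h2 := congrFun (CD_neu2 p ε) (Function.update w i b)
    simp only [tp, hi, if_true]
    exact h2
  · refine ⟨D p (!ε) w, fun b => ?_⟩
    have : Function.update (D p (!ε) w) i b = D p (!ε) (Function.update w (i - 1) b) := by
      funext j; simp only [Function.update_apply, D]; grind
    rw [this]
    have h2 := congrFun (CD_neu1 p ε) (Function.update w (i - 1) b)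
    simp only [tp, hi, if_false]
    exact h2

theorem wG_P : ∀ (l : List (ℕ × Bool)) (i : ℕ) (w : T),
    ∃ z : T, ∀ b, wG l (Function.update z i b) = Function.update w (tau l i) b
  | [], i, w => ⟨w, fun _ => rfl⟩
  | (p, ε) :: l, i, w => by
    obtain ⟨z', h'⟩ := C_P p ε (tau l i) w
    obtain ⟨z, h⟩ := wG_P l i z'
    exact ⟨z, fun b => by simp only [wG, Function.comp, h, h', tau]⟩

theorem wG_surj (l : List (ℕ × Bool)) : Function.Surjective (wG l) := by
  intro w
  obtain ⟨z, h⟩ := wG_P l 0 w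
  exact ⟨_, (h (w (tau l 0))).trans (Function.update_eq_self _ _)⟩

theorem wGS_unique {g g' : List (ℕ × Bool)} {l l' : List ℕ} (h : l.Pairwise (· < ·))
    (h' : l'.Pairwise (· < ·)) (e : wG g ∘ wS l = wG g' ∘ wS l') : l = l' ∧ wG g = wG g' := by
  have key : ∀ (g : List (ℕ × Bool)) (l : List ℕ), l.Pairwise (· < ·) → ∀ k, k ∈ l ↔
      ∀ z b, (wG g ∘ wS l) (Function.update z k b) = (wG g ∘ wS l) z := by
    intro g l h k
    constructor
    · intro hk z b
      have : wS l (Function.update z k b) = wS l z := by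
        funext j
        rw [wS_phi, wS_phi, Function.update_of_ne]
        intro hc
        exact (phi_range l h k).1 ⟨j, hc⟩ hk
      simp [this]
    · intro hz
      by_contra hk
      obtain ⟨j, rfl⟩ := (phi_range l h k).2 hk
      obtain ⟨w, hw⟩ := wG_P g j (fun _ => true)
      obtain ⟨z, rfl⟩ := wS_surj l w
      have h1 : ∀ b, wS l (Function.update z (phi l j) b) = Function.update (wS l z) j b := by
        intro b; funext i
        rw [wS_phi]
        simp only [Function.update_apply, (phi_inj l).eq_iff, wS_phi]
      have h2 := (hz z true).trans (hz z false).symm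
      simp only [Function.comp, h1, hw] at h2
      have := congrFun h2 (tau g j)
      simp at this
  have hl : l = l' := by
    have pm : l.Perm l' := (List.perm_ext_iff_of_nodup (h.imp (fun {a b} hab => by omega))
      (h'.imp (fun {a b} hab => by omega))).2 (fun k => by rw [key g l h, key g' l' h', e])
    exact pm.eq_of_pairwise (fun a b _ _ h1 h2 => by exfalso; omega) h h'
  subst hl
  exact ⟨rfl, (wS_surj l).injective_comp_right e⟩

theorem tau_unique {l l' : List (ℕ × Bool)} (e : wG l = wG l') : tau l = tau l' := by
  funext i
  by_contra hne
  obtain ⟨z, hz⟩ := wG_P l i (fun _ => true)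
  have h1 : wG l (Function.update z i true) (tau l i) = wG l (Function.update z i false) (tau l i) := by
    rw [e]
    refine wG_dep l' _ _ _ (fun j hj => ?_)
    have : j ≠ i := by rintro rfl; exact hne hj.symm
    simp [this]
  rw [hz, hz] at h1
  simp at h1

theorem tau_fix : ∀ (l : List (ℕ × Bool)) (p i : ℕ), (∀ x ∈ l, p ≤ x.1) → i ≤ p → tau l i = i
  | [], _, _, _, _ => rfl
  | (q, _) :: l, p, i, h, hi => by
    have h1 := tau_fix l p i (fun x hx => h x (by simp [hx])) hi
    have h2 : p ≤ q := h (q, _) (List.mem_cons_self)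
    simp only [tau, h1, tp, if_pos (hi.trans h2)]

theorem tau_fiber {l : List (ℕ × Bool)} {p i : ℕ} (h : ∀ x ∈ l, p < x.1) (hi : tau l i = p) :
    i = p := by
  by_contra hne
  rcases lt_or_gt_of_ne hne with h1 | h1
  · rw [tau_fix l p i (fun x hx => (h x hx).le) h1.le] at hi; omega
  · have := tau_mono l (show p + 1 ≤ i from h1)
    rw [tau_fix l (p + 1) (p + 1) (fun x hx => h x hx) le_rfl] at this
    omega

theorem tau_two (p : ℕ) (ε : Bool) (l : List (ℕ × Bool)) :
    ∃ i i', i ≠ i' ∧ tau ((p, ε) :: l) i = p ∧ tau ((p, ε) :: l) i' = p := by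
  obtain ⟨i, hi⟩ := tau_surj l p
  obtain ⟨i', hi'⟩ := tau_surj l (p + 1)
  refine ⟨i, i', ?_, by simp [tau, hi, tp], by simp [tau, hi', tp]⟩
  rintro rfl; omega

theorem chain_le : ∀ {l : List (ℕ × Bool)} {a : ℕ × Bool}, (a :: l).IsChain R →
    ∀ x ∈ l, a.1 ≤ x.1
  | [], _, _, x, hx => by simp at hx
  | b :: l, a, h, x, hx => by
    obtain ⟨h1, h2⟩ := List.isChain_cons_cons.1 h
    have hab : a.1 ≤ b.1 := by rcases h1 with h | h <;> omega
    rcases List.mem_cons.1 hx with rfl | hx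
    · exact hab
    · exact hab.trans (chain_le h2 x hx)

/-- coordinate p of the composite -/
theorem C_at (p : ℕ) (ε : Bool) (x : T) : C p ε x p = op ε (x p) (x (p + 1)) := by simp [C]

/-- If the heads agree in position, they agree in colour. -/
theorem colour {l l' : List (ℕ × Bool)} {p : ℕ} {ε : Bool}
    (e : C p ε ∘ wG l = C p (!ε) ∘ wG l') : False := by
  classical
  have e' : ∀ z, op ε (wG l z p) (wG l z (p + 1)) = op (!ε) (wG l' z p) (wG l' z (p + 1)) := by
    intro z
    have := congrFun (congrFun e z) p
    simpa only [Function.comp, C_at] using this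
  obtain ⟨z1, h1⟩ := wG_surj l (fun _ => ε)
  obtain ⟨z2, h2⟩ := wG_surj l' (fun _ => !ε)
  by_cases hc : ∃ i0, tau l' i0 = p + 1 ∧ tau l i0 = p
  · obtain ⟨i0, hi, hi'⟩ := hc
    have hA : ∀ i, tau l' i = p → tau l i ≠ p + 1 := by
      intro i h3 h4
      have h5 : i ≤ i0 := by
        by_contra hlt
        have := tau_mono l' (show i0 ≤ i by omega)
        omega
      have := tau_mono l h5
      omega
    have hz := e' (fun i => if tau l i = p + 1 then z1 i else z2 i)
    rw [wG_dep l (p + 1) _ z1 (by intro i hi; simp [hi]), h1, op_absr,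
      wG_dep l' p _ z2 (by intro i hi; simp [hA i hi]), h2, op_absl] at hz
    simp at hz
  · have hz := e' (fun i => if tau l i = p then z1 i else z2 i)
    rw [wG_dep l p _ z1 (by intro i hi; simp [hi]), h1, op_absl,
      wG_dep l' (p + 1) _ z2 (by intro i hi; rw [if_neg]; exact fun h => hc ⟨i, hi, h⟩),
      h2, op_absr] at hz
    simp at hz

theorem split_le {l l' : List (ℕ × Bool)} {p : ℕ} {ε : Bool}
    (hl : ((p, ε) :: l).IsChain R) (hl' : ((p, ε) :: l').IsChain R)
    (e : C p ε ∘ wG l = C p ε ∘ wG l') (i0 : ℕ) (h0 : tau l i0 = p) : tau l' i0 = p := by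
  classical
  by_contra h0'
  have e' : ∀ z, op ε (wG l z p) (wG l z (p + 1)) = op ε (wG l' z p) (wG l' z (p + 1)) := by
    intro z
    have := congrFun (congrFun e z) p
    simpa only [Function.comp, C_at] using this
  have ht : tau ((p, ε) :: l) = tau ((p, ε) :: l') := tau_unique e
  have h0'' : tau l' i0 = p + 1 := by
    have := congrFun ht i0
    simp only [tau, tp, h0] at this
    split_ifs at this <;> omega
  have hlt : ∀ i, tau l' i = p → tau l i ≤ p := by
    intro i hi
    have h5 : i ≤ i0 := by
      by_contra hlt
      have := tau_mono l' (show i0 ≤ i by omega)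
      omega
    have := tau_mono l h5
    omega
  -- the shape of l
  obtain ⟨l2, rfl⟩ : ∃ l2, l = (p, !ε) :: l2 := by
    cases l with
    | nil =>
      exfalso
      have : i0 = p := h0
      rw [this, tau_fix l' p p (chain_le hl') le_rfl] at h0'
      exact h0' rfl
    | cons hd l2 =>
      obtain ⟨q, δ⟩ := hd
      obtain ⟨r1, r2⟩ := List.isChain_cons_cons.1 hl
      rcases r1 with r1 | ⟨r1, r3⟩
      · exfalso
        simp only at r1
        have : i0 = p := by
          refine tau_fiber ?_ h0
          intro x hx
          rcases List.mem_cons.1 hx with rfl | hx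
          · exact r1
          · have := chain_le r2 x hx
            simp only at this; omega
        rw [this, tau_fix l' p p (chain_le hl') le_rfl] at h0'
        exact h0' rfl
      · simp only at r1 r3
        subst r1
        have : δ = !ε := by revert r3; cases δ <;> cases ε <;> simp
        exact ⟨l2, by rw [this]⟩
  have hA : ∀ z, wG ((p, !ε) :: l2) z p = op (!ε) (wG l2 z p) (wG l2 z (p + 1)) := by
    intro z; simp only [wG, Function.comp, C_at]
  have ht2 : ∀ i, tau l2 i = p ∨ tau l2 i = p + 1 → tau ((p, !ε) :: l2) i = p := by
    rintro i (hi | hi) <;> simp [tau, hi, tp]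
  obtain ⟨y, hy⟩ := wG_surj ((p, !ε) :: l2) (fun _ => !ε)
  obtain ⟨z2, h2⟩ := wG_surj l2 (fun _ => !ε)
  by_cases hc : ∃ i1, tau l' i1 = p ∧ tau l2 i1 = p + 1
  · obtain ⟨i1, hi1, hi1'⟩ := hc
    have hC : ∀ i, tau l2 i = p → tau l' i ≤ p := by
      intro i hi
      have h5 : i ≤ i1 := by
        by_contra hlt
        have := tau_mono l2 (show i1 ≤ i by omega)
        omega
      have := tau_mono l' h5
      omega
    obtain ⟨z, hz⟩ := wG_P ((p, !ε) :: l2) i0 (fun _ => !ε)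
    have a1 : ∀ b, wG ((p, !ε) :: l2) (Function.update z i0 b) p = b := by
      intro b; rw [hz, h0]; simp
    have a2 : ∀ b, wG ((p, !ε) :: l2) (Function.update z i0 b) (p + 1) = !ε := by
      intro b; rw [hz, h0]; simp
    have a3 := e' (Function.update z i0 (!ε))
    rw [a1, a2, op_neur] at a3
    have a4 := (op_eq_neu a3.symm).1
    have a5 : wG l' (Function.update z i0 ε) p = !ε := by
      rw [← a4]
      refine wG_dep l' _ _ _ (fun j hj => ?_)
      have : j ≠ i0 := by rintro rfl; exact h0' hj
      simp [this]
    have a6 := e' (Function.update z i0 ε)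
    rw [a1, a2, a5, op_neur, op_neul] at a6
    have hf := e' (fun i => if tau l2 i = p then z2 i else Function.update z i0 ε i)
    rw [wG_dep l' (p + 1) _ (Function.update z i0 ε), ← a6, op_absr, hA,
      wG_dep l2 p _ z2, h2, op_absl,
      wG_dep ((p, !ε) :: l2) (p + 1) _ (Function.update z i0 ε), a2, op_neur] at hf
    · simp at hf
    · intro i hi
      rw [if_neg]; intro h; have := ht2 i (Or.inl h); omega
    · intro i hi; simp [hi]
    · intro i hi
      rw [if_neg]; intro h; have := hC i h; omega
  · obtain ⟨z1, h1⟩ := wG_surj l' (fun _ => ε)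
    have hf := e' (fun i => if tau l' i = p then z1 i else if tau l2 i = p + 1 then z2 i else y i)
    rw [wG_dep l' p _ z1, h1, op_absl, hA,
      wG_dep l2 (p + 1) _ z2, h2, op_absr,
      wG_dep ((p, !ε) :: l2) (p + 1) _ y, hy, op_neur] at hf
    · simp at hf
    · intro i hi
      rw [if_neg, if_neg]
      · intro h; have := ht2 i (Or.inr h); omega
      · intro h; have := hlt i h; omega
    · intro i hi
      rw [if_neg, if_pos hi]
      intro h; exact hc ⟨i, h, hi⟩
    · intro i hi; simp [hi]

theorem cancel {l l' : List (ℕ × Bool)} {p : ℕ} {ε : Bool}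
    (hl : ((p, ε) :: l).IsChain R) (hl' : ((p, ε) :: l').IsChain R)
    (e : C p ε ∘ wG l = C p ε ∘ wG l') : wG l = wG l' := by
  classical
  have hp : ∀ i, tau l i = p ↔ tau l' i = p :=
    fun i => ⟨split_le hl hl' e i, split_le hl' hl e.symm i⟩
  have ht : tau ((p, ε) :: l) = tau ((p, ε) :: l') := tau_unique e
  have hp1 : ∀ i, tau l i = p + 1 ↔ tau l' i = p + 1 := by
    intro i
    have h1 := hp i
    have := congrFun ht i
    simp only [tau, tp] at this
    split_ifs at this <;> omega
  have e' : ∀ z, op ε (wG l z p) (wG l z (p + 1)) = op ε (wG l' z p) (wG l' z (p + 1)) := by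
    intro z
    have := congrFun (congrFun e z) p
    simpa only [Function.comp, C_at] using this
  obtain ⟨y, hy⟩ := wG_surj l (fun _ => !ε)
  have hy' := e' y
  rw [hy, op_neur] at hy'
  obtain ⟨b1, b2⟩ := op_eq_neu hy'.symm
  funext z k
  have ek := fun k => congrFun (congrFun e z) k
  rcases lt_trichotomy k p with hk | hk | hk
  · simpa [C, hk] using ek k
  · subst hk
    have hf := e' (fun i => if tau l i = k then z i else y i)
    rw [wG_dep l k _ z, wG_dep l (k + 1) _ y, hy, op_neur,
      wG_dep l' k _ z, wG_dep l' (k + 1) _ y, b2, op_neur] at hf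
    · exact hf
    · intro i hi; rw [if_neg]; rw [hp]; omega
    · intro i hi; rw [if_pos]; rwa [hp]
    · intro i hi; rw [if_neg]; omega
    · intro i hi; rw [if_pos hi]
  · rcases Nat.eq_or_lt_of_le (show p + 1 ≤ k from hk) with hk1 | hk1
    · subst hk1
      have hf := e' (fun i => if tau l i = p + 1 then z i else y i)
      rw [wG_dep l (p + 1) _ z, wG_dep l p _ y, hy, op_neul,
        wG_dep l' (p + 1) _ z, wG_dep l' p _ y, b1, op_neul] at hf
      · exact hf
      · intro i hi; rw [if_neg]; rw [hp1]; omega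
      · intro i hi; rw [if_pos]; rwa [hp1]
      · intro i hi; rw [if_neg]; omega
      · intro i hi; rw [if_pos hi]
    · have h3 := ek (k - 1)
      have h4 : ¬ k - 1 < p := by omega
      have h5 : k - 1 ≠ p := by omega
      have h6 : k - 1 + 1 = k := by omega
      simpa only [Function.comp, C, h4, h5, h6, if_false] using h3

theorem lt_absurd {l l' : List (ℕ × Bool)} {p q : ℕ} {ε δ : Bool} (h : p < q)
    (hl' : ((q, δ) :: l').IsChain R) (e : wG ((p, ε) :: l) = wG ((q, δ) :: l')) : False := by
  obtain ⟨i, i', hne, h1, h2⟩ := tau_two p ε l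
  rw [tau_unique e] at h1 h2
  have hb : ∀ x ∈ (q, δ) :: l', p < x.1 := by
    intro x hx
    rcases List.mem_cons.1 hx with rfl | hx
    · exact h
    · have := chain_le hl' x hx
      simp only at this; omega
  exact hne ((tau_fiber hb h1).trans (tau_fiber hb h2).symm)

theorem nil_absurd {l : List (ℕ × Bool)} {p : ℕ} {ε : Bool}
    (e : wG ((p, ε) :: l) = wG []) : False := by
  obtain ⟨i, i', hne, h1, h2⟩ := tau_two p ε l
  rw [tau_unique e] at h1 h2
  exact hne (Eq.trans h1 (Eq.symm h2))

theorem wG_unique : ∀ {l l' : List (ℕ × Bool)}, l.IsChain R → l'.IsChain R → wG l = wG l' → l = l'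
  | [], [], _, _, _ => rfl
  | [], _ :: _, _, _, e => (nil_absurd e.symm).elim
  | _ :: _, [], _, _, e => (nil_absurd e).elim
  | (p, ε) :: l, (q, δ) :: l', h, h', e => by
    rcases lt_trichotomy p q with hpq | hpq | hpq
    · exact (lt_absurd hpq h' e).elim
    · subst hpq
      by_cases he : δ = ε
      · subst he
        have ht : l = l' := wG_unique h.tail h'.tail (cancel h h' e)
        rw [ht]
      · obtain rfl : δ = !ε := by revert he; cases δ <;> cases ε <;> simp
        exact (colour e).elim
    · exact (lt_absurd hpq h e.symm).elim

theorem chain_R {l : List (ℕ × Bool)} : l.IsChain R ↔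
    (l.map Prod.fst).Chain' (· ≤ ·) ∧ l.Chain' (fun a b => a.1 = b.1 → a.2 ≠ b.2) := by
  unfold List.Chain'
  rw [List.isChain_map]
  induction l with
  | nil => simp
  | cons a l ih =>
    cases l with
    | nil => simp
    | cons b l =>
      simp only [List.isChain_cons_cons, ih]
      have : R a b ↔ a.1 ≤ b.1 ∧ (a.1 = b.1 → a.2 ≠ b.2) := by
        unfold R
        constructor
        · rintro (h | ⟨h, h'⟩)
          · exact ⟨h.le, fun h2 => by omega⟩
          · exact ⟨h.le, fun _ => h'⟩
        · rintro ⟨h, h'⟩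
          rcases Nat.eq_or_lt_of_le h with h | h
          · exact Or.inr ⟨h, h' h⟩
          · exact Or.inl h
      rw [this]
      tauto

theorem all_unique {ls ls' : List ℕ} {lg lg' ld ld' : List (ℕ × Bool)}
    (hs : ls.Pairwise (· < ·)) (hs' : ls'.Pairwise (· < ·))
    (hg : lg.IsChain R) (hg' : lg'.IsChain R)
    (hd : (ld.map Prod.fst).Pairwise (· > ·)) (hd' : (ld'.map Prod.fst).Pairwise (· > ·))
    (e : ∀ z, wD ld (wG lg (wS ls z)) = wD ld' (wG lg' (wS ls' z))) :
    ls = ls' ∧ lg = lg' ∧ ld = ld' := by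
  obtain ⟨h1, h2⟩ := wD_unique hd hd' (H := wG lg ∘ wS ls) (H' := wG lg' ∘ wS ls')
    ((wG_surj _).comp (wS_surj _)) ((wG_surj _).comp (wS_surj _)) e
  obtain ⟨h3, h4⟩ := wGS_unique hs hs' h2
  exact ⟨h3, wG_unique hg hg' h4, h1⟩

end BoxNF

/-- **Normal form for morphisms of the box category** (Grandis–Mauri).
Every morphism of `□` factors as `(∂_{k_1,ε_1} ⋯ ∂_{k_t,ε_t}) ∘ (γ_{j_1,δ_1} ⋯ γ_{j_s,δ_s}) ∘
(σ_{i_1} ⋯ σ_{i_r})` with `1 ≤ i_1 < ⋯ < i_r`, `1 ≤ j_1 ≤ ⋯ ≤ j_s` and `k_1 > ⋯ > k_t ≥ 1`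
(1-based indices), and this factorization is unique under the additional condition that
`δ_p ≠ δ_{p+1}` whenever `j_p = j_{p+1}`. -/
theorem box_normal_form {m n : ℕ} (f : Cube m → Cube n) (hf : IsBoxMap f) :
    ∃ (ls : List ℕ) (lg : List (ℕ × Bool)) (ld : List (ℕ × Bool)) (b : ℕ)
      (h1 : m = (b + lg.length) + ls.length) (h2 : n = b + ld.length),
      sigmaValid ls (b + lg.length) ∧ ls.Chain' (· < ·) ∧
      gammaValid lg b ∧ (lg.map Prod.fst).Chain' (· ≤ ·) ∧
      lg.Chain' (fun a b => a.1 = b.1 → a.2 ≠ b.2) ∧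
      deltaValid ld b ∧ (ld.map Prod.fst).Chain' (· > ·) ∧
      (∀ x : Cube m,
        f x = cubeCast h2.symm (deltaWord ld (gammaWord lg (sigmaWord ls (cubeCast h1 x))))) ∧
      (∀ (ls' : List ℕ) (lg' ld' : List (ℕ × Bool)) (b' : ℕ)
        (h1' : m = (b' + lg'.length) + ls'.length) (h2' : n = b' + ld'.length),
        sigmaValid ls' (b' + lg'.length) → ls'.Chain' (· < ·) →
        gammaValid lg' b' → (lg'.map Prod.fst).Chain' (· ≤ ·) →
        lg'.Chain' (fun a b => a.1 = b.1 → a.2 ≠ b.2) →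
        deltaValid ld' b' → (ld'.map Prod.fst).Chain' (· > ·) →
        (∀ x : Cube m,
          f x = cubeCast h2'.symm
            (deltaWord ld' (gammaWord lg' (sigmaWord ls' (cubeCast h1' x))))) →
        ls = ls' ∧ lg = lg' ∧ ld = ld') := by
  obtain ⟨F, ⟨a, b, s, g, d, hs, hg, hd, rfl⟩, hF⟩ := BoxNF.box_Q hf
  obtain ⟨ls, s1, s2, s3, rfl⟩ := BoxNF.sortS hs
  obtain ⟨lg, g1, g2, g3, rfl⟩ := BoxNF.sortG hg
  obtain ⟨ld, d1, d2, d3, rfl⟩ := BoxNF.sortD hd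
  subst g1
  refine ⟨ls, lg, ld, b, s1, d1, s2, List.isChain_iff_pairwise.2 s3, g2, (BoxNF.chain_R.1 g3).1,
    (BoxNF.chain_R.1 g3).2, d2, List.isChain_iff_pairwise.2 d3, ?_, ?_⟩
  · intro x
    apply BoxNF.E_inj (y := fun _ => true)
    rw [hF, BoxNF.E_all s1 d1 s2 g2 d2]
    rfl
  · intro ls' lg' ld' b' h1' h2' v1 c1 v2 c2 c3 v3 c4 e
    refine BoxNF.all_unique s3 (List.isChain_iff_pairwise.1 c1) g3 (BoxNF.chain_R.2 ⟨c2, c3⟩) d3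
      (List.isChain_iff_pairwise.1 c4) ?_
    intro z
    obtain ⟨x, y, rfl⟩ := BoxNF.E_surj m z
    rw [← BoxNF.E_all h1' h2' v1 v2 v3, ← e, hF]
    rfl
end

section
/- The box category □ is a Reedy category with degree function deg([1]^n) = n, with □₋ generated by degeneracies and connections and □₊ generated by face maps; moreover it satisfies the Eilenberg–Zilber property: every morphism in □₋ is a split epimorphism and is determined by its set of sections. -/
/-- The predicate of being a composite of finitely many face maps in the box category. -/
inductive IsFaceComposite : {m n : ℕ} → (Cube m → Cube n) → Prop
  | id {n : ℕ} : IsFaceComposite (fun x : Cube n => x)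
  | face {n : ℕ} (i : Fin (n + 1)) (ε : Bool) : IsFaceComposite (face i ε)
  | comp {m n k : ℕ} {f : Cube m → Cube n} {g : Cube n → Cube k} :
      IsFaceComposite f → IsFaceComposite g → IsFaceComposite (g ∘ f)

/-- The predicate of being a composite of degeneracies and connections,
i.e. a morphism of the degree-lowering part `□₋` of the box category. -/
inductive IsMinus : {m n : ℕ} → (Cube m → Cube n) → Prop
  | id {n : ℕ} : IsMinus (fun x : Cube n => x)
  | degen {n : ℕ} (i : Fin (n + 1)) : IsMinus (degen i)
  | conn {n : ℕ} (i : Fin (n + 1)) (ε : Bool) : IsMinus (conn i ε)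
  | comp {m n k : ℕ} {f : Cube m → Cube n} {g : Cube n → Cube k} :
      IsMinus f → IsMinus g → IsMinus (g ∘ f)

theorem face_same {n : ℕ} (i : Fin (n + 1)) (ε : Bool) (x : Cube n) : face i ε x i = ε :=
  Fin.insertNth_apply_same (α := fun _ => Bool) i ε x

theorem face_succAbove {n : ℕ} (i : Fin (n + 1)) (ε : Bool) (x : Cube n) (k : Fin n) :
    face i ε x (i.succAbove k) = x k :=
  Fin.insertNth_apply_succAbove (α := fun _ => Bool) i ε x k

def cst (n : ℕ) (b : Bool) : Cube n := fun _ => b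

theorem cst_apply (n : ℕ) (b : Bool) (k : Fin n) : cst n b k = b := rfl

theorem face_apply' {n : ℕ} (i : Fin (n + 1)) (ε : Bool) (x : Cube n) (k : Fin (n + 1)) :
    face i ε x k = if h : k.val < i.val then x ⟨k.val, by omega⟩
      else if h' : k.val = i.val then ε else x ⟨k.val - 1, by omega⟩ := by
  rcases lt_trichotomy k i with h | h | h
  · have : k = i.succAbove ⟨k.val, by omega⟩ := by
      ext; rw [Fin.succAbove_of_castSucc_lt _ _ h]; simp
    conv_lhs => rw [this]
    rw [face_succAbove, dif_pos (by exact h)]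
  · subst h; rw [face_same, dif_neg (by omega), dif_pos rfl]
  · have h2 : i.val < k.val := h
    have : k = i.succAbove ⟨k.val - 1, by omega⟩ := by
      ext; rw [Fin.succAbove_of_le_castSucc]
      · simp; omega
      · rw [Fin.le_def]; simp; omega
    conv_lhs => rw [this]
    rw [face_succAbove, dif_neg (by omega), dif_neg (by omega)]

theorem degen_apply' {n : ℕ} (i : Fin (n + 1)) (x : Cube (n + 1)) (k : Fin n) :
    degen i x k = if k.val < i.val then x ⟨k.val, by omega⟩ else x ⟨k.val + 1, by omega⟩ := by
  unfold degen
  split_ifs with h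
  · congr 1
    rw [Fin.succAbove_of_castSucc_lt]
    · ext; simp
    · rw [Fin.lt_def]; simpa using h
  · congr 1
    rw [Fin.succAbove_of_le_castSucc]
    · ext; simp
    · rw [Fin.le_def]; simpa using h

theorem conn_apply' {n : ℕ} (i : Fin (n + 1)) (ε : Bool) (x : Cube (n + 2)) (j : Fin (n + 1)) :
    conn i ε x j = if j.val < i.val then x ⟨j.val, by omega⟩
    else if j.val = i.val then
      (if ε then x ⟨i.val, by omega⟩ || x ⟨i.val + 1, by omega⟩
        else x ⟨i.val, by omega⟩ && x ⟨i.val + 1, by omega⟩)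
    else x ⟨j.val + 1, by omega⟩ := rfl

theorem cube_ext {n : ℕ} {x y : Cube n} (h : ∀ i, x i = y i) : x = y := funext h

theorem degen_face_self {n : ℕ} (i : Fin (n + 1)) (ε : Bool) :
    degen i ∘ face i ε = fun x : Cube n => x := by
  funext x; apply cube_ext; intro k
  simp only [Function.comp, degen_apply', face_apply']
  grind

theorem degen_face_lt {n : ℕ} (i : Fin (n + 2)) (j : Fin (n + 2)) (ε : Bool) (h : j.val < i.val) :
    degen i ∘ face j ε = face (n := n) ⟨j.val, by omega⟩ ε ∘ degen ⟨i.val - 1, by omega⟩ := by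
  funext x; apply cube_ext; intro k
  simp only [Function.comp, degen_apply', face_apply']
  grind

theorem degen_face_gt {n : ℕ} (i : Fin (n + 2)) (j : Fin (n + 2)) (ε : Bool) (h : i.val < j.val) :
    degen i ∘ face j ε = face (n := n) ⟨j.val - 1, by omega⟩ ε ∘ degen ⟨i.val, by omega⟩ := by
  funext x; apply cube_ext; intro k
  simp only [Function.comp, degen_apply', face_apply']
  grind

theorem conn_face_lt {n : ℕ} (i : Fin (n + 2)) (j : Fin (n + 3)) (ε δ : Bool)
    (h : j.val < i.val) :
    conn i δ ∘ face j ε = face (n := n + 1) ⟨j.val, by omega⟩ ε ∘ conn ⟨i.val - 1, by omega⟩ δ := by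
  funext x; apply cube_ext; intro k
  simp only [Function.comp, conn_apply', face_apply']
  grind

theorem conn_face_gt {n : ℕ} (i : Fin (n + 2)) (j : Fin (n + 3)) (ε δ : Bool)
    (h : i.val + 1 < j.val) :
    conn i δ ∘ face j ε = face (n := n + 1) ⟨j.val - 1, by omega⟩ ε ∘ conn ⟨i.val, by omega⟩ δ := by
  funext x; apply cube_ext; intro k
  simp only [Function.comp, conn_apply', face_apply']
  grind

theorem conn_face_id {n : ℕ} (i : Fin (n + 1)) (j : Fin (n + 2)) (δ : Bool)
    (h : j.val = i.val ∨ j.val = i.val + 1) :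
    conn i δ ∘ face j (!δ) = fun x => x := by
  funext x; apply cube_ext; intro k
  simp only [Function.comp, conn_apply', face_apply']
  cases δ <;> grind

theorem conn_face_const {n : ℕ} (i : Fin (n + 1)) (j : Fin (n + 2)) (δ : Bool)
    (h : j.val = i.val ∨ j.val = i.val + 1) :
    conn i δ ∘ face j δ = face i δ ∘ degen i := by
  funext x; apply cube_ext; intro k
  simp only [Function.comp, conn_apply', face_apply', degen_apply']
  cases δ <;> grind

inductive FaceOrId : {m n : ℕ} → (Cube m → Cube n) → Prop
  | id {n : ℕ} : FaceOrId (fun x : Cube n => x)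
  | face {n : ℕ} (i : Fin (n + 1)) (ε : Bool) : FaceOrId (face i ε)

theorem FaceOrId.fc {m n : ℕ} {f : Cube m → Cube n} (h : FaceOrId f) : IsFaceComposite f := by
  cases h
  · exact .id
  · exact .face _ _

theorem IsFaceComposite.box {m n : ℕ} {f : Cube m → Cube n} (h : IsFaceComposite f) :
    IsBoxMap f := by
  induction h with
  | id => exact .id
  | face i ε => exact .face i ε
  | comp _ _ h1 h2 => exact .comp h1 h2

theorem IsMinus.box {m n : ℕ} {f : Cube m → Cube n} (h : IsMinus f) :
    IsBoxMap f := by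
  induction h with
  | id => exact .id
  | degen i => exact .degen i
  | conn i ε => exact .conn i ε
  | comp _ _ h1 h2 => exact .comp h1 h2

theorem exch_degen {l n : ℕ} (i : Fin (n + 1)) (d : Cube l → Cube (n + 1)) (hd : FaceOrId d) :
    ∃ (k : ℕ) (g : Cube l → Cube k) (h : Cube k → Cube n),
      IsMinus g ∧ FaceOrId h ∧ degen i ∘ d = h ∘ g := by
  cases hd with
  | id => exact ⟨_, degen i, fun x => x, .degen i, .id, rfl⟩
  | face j ε =>
    rcases lt_trichotomy j.val i.val with h | h | h
    · obtain _ | l := l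
      · omega
      · exact ⟨_, _, _, .degen _, .face _ _, degen_face_lt i j ε h⟩
    · obtain rfl : j = i := Fin.ext h
      exact ⟨_, _, _, .id, .id, degen_face_self j ε⟩
    · obtain _ | l := l
      · omega
      · exact ⟨_, _, _, .degen _, .face _ _, degen_face_gt i j ε h⟩

theorem exch_conn {l n : ℕ} (i : Fin (n + 1)) (δ : Bool) (d : Cube l → Cube (n + 2))
    (hd : FaceOrId d) :
    ∃ (k : ℕ) (g : Cube l → Cube k) (h : Cube k → Cube (n + 1)),
      IsMinus g ∧ FaceOrId h ∧ conn i δ ∘ d = h ∘ g := by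
  cases hd with
  | id => exact ⟨_, conn i δ, fun x => x, .conn i δ, .id, rfl⟩
  | face j ε =>
    by_cases h1 : j.val < i.val
    · obtain _ | n := n
      · omega
      · exact ⟨_, _, _, .conn _ _, .face _ _, conn_face_lt i j ε δ h1⟩
    by_cases h2 : i.val + 1 < j.val
    · obtain _ | n := n
      · omega
      · exact ⟨_, _, _, .conn _ _, .face _ _, conn_face_gt i j ε δ h2⟩
    have h3 : j.val = i.val ∨ j.val = i.val + 1 := by omega
    by_cases h4 : ε = δ
    · subst h4
      exact ⟨_, _, _, .degen _, .face _ _, conn_face_const i j ε h3⟩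
    · obtain rfl : ε = !δ := by cases ε <;> cases δ <;> simp_all
      exact ⟨_, _, _, .id, .id, conn_face_id i j δ h3⟩

theorem exch1 {m n : ℕ} {g : Cube m → Cube n} (hg : IsMinus g) :
    ∀ {l : ℕ} (d : Cube l → Cube m), FaceOrId d →
    ∃ (k : ℕ) (g' : Cube l → Cube k) (h : Cube k → Cube n),
      IsMinus g' ∧ FaceOrId h ∧ g ∘ d = h ∘ g' := by
  induction hg with
  | id => intro l d hd; exact ⟨_, fun x => x, d, .id, hd, rfl⟩
  | degen i => intro l d hd; exact exch_degen i d hd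
  | conn i ε => intro l d hd; exact exch_conn i ε d hd
  | @comp _ _ _ f g _ _ h1 h2 =>
    intro l d hd
    obtain ⟨k, g1, d1, hg1, hd1, e1⟩ := h1 d hd
    obtain ⟨k2, g2, d2, hg2, hd2, e2⟩ := h2 d1 hd1
    refine ⟨k2, g2 ∘ g1, d2, .comp hg1 hg2, hd2, ?_⟩
    rw [Function.comp_assoc, e1, ← Function.comp_assoc, e2]; rfl

theorem exch2 {l m : ℕ} {d : Cube l → Cube m} (hd : IsFaceComposite d) :
    ∀ {n : ℕ} (g : Cube m → Cube n), IsMinus g →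
    ∃ (k : ℕ) (g' : Cube l → Cube k) (h : Cube k → Cube n),
      IsMinus g' ∧ IsFaceComposite h ∧ g ∘ d = h ∘ g' := by
  induction hd with
  | id => intro n g hg; exact ⟨_, g, fun x => x, hg, .id, rfl⟩
  | face i ε =>
    intro n g hg
    obtain ⟨k, g', h, a, b, c⟩ := exch1 hg (face i ε) (.face i ε)
    exact ⟨k, g', h, a, b.fc, c⟩
  | @comp _ _ _ d1 d2 _ _ h1 h2 =>
    intro n g hg
    obtain ⟨k, g', h, a, b, c⟩ := h2 g hg
    obtain ⟨k1, g1', h1, a1, b1, c1⟩ := h1 g' a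
    refine ⟨k1, g1', h ∘ h1, a1, .comp b1 b, ?_⟩
    rw [← Function.comp_assoc, c, Function.comp_assoc, c1]; rfl

theorem box_factor {m n : ℕ} {f : Cube m → Cube n} (hf : IsBoxMap f) :
    ∃ (k : ℕ) (g : Cube m → Cube k) (h : Cube k → Cube n),
      IsMinus g ∧ IsFaceComposite h ∧ f = h ∘ g := by
  induction hf with
  | id => exact ⟨_, _, _, .id, .id, rfl⟩
  | face i ε => exact ⟨_, fun x => x, _, .id, .face i ε, rfl⟩
  | degen i => exact ⟨_, _, fun x => x, .degen i, .id, rfl⟩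
  | conn i ε => exact ⟨_, _, fun x => x, .conn i ε, .id, rfl⟩
  | comp _ _ h1 h2 =>
    obtain ⟨k1, g1, d1, a1, b1, rfl⟩ := h1
    obtain ⟨k2, g2, d2, a2, b2, rfl⟩ := h2
    obtain ⟨k, g, d, a, b, c⟩ := exch2 b1 g2 a2
    refine ⟨k, g ∘ g1, d2 ∘ d, .comp a1 a, .comp b b2, ?_⟩
    funext x
    have := congrFun c (g1 x)
    simp only [Function.comp] at this ⊢
    rw [this]

theorem minus_deg {m n : ℕ} {f : Cube m → Cube n} (hf : IsMinus f) :
    n ≤ m ∧ (∀ h : m = n, ∀ (x : Cube m) (j : Fin n), f x j = x (Fin.cast h.symm j)) := by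
  induction hf with
  | id => exact ⟨le_rfl, fun _ _ _ => rfl⟩
  | degen i => exact ⟨by omega, fun h => by omega⟩
  | conn i ε => exact ⟨by omega, fun h => by omega⟩
  | @comp a b c f g _ _ h1 h2 =>
    refine ⟨h2.1.trans h1.1, ?_⟩
    rintro rfl x j
    obtain rfl : a = b := le_antisymm h2.1 h1.1
    exact (h2.2 rfl (f x) j).trans (h1.2 rfl x j)

theorem fc_deg {m n : ℕ} {f : Cube m → Cube n} (hf : IsFaceComposite f) :
    m ≤ n ∧ (∀ h : m = n, ∀ (x : Cube m) (j : Fin n), f x j = x (Fin.cast h.symm j)) := by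
  induction hf with
  | id => exact ⟨le_rfl, fun _ _ _ => rfl⟩
  | face i ε => exact ⟨by omega, fun h => by omega⟩
  | @comp a b c f g _ _ h1 h2 =>
    refine ⟨h1.1.trans h2.1, ?_⟩
    rintro rfl x j
    obtain rfl : a = b := le_antisymm h1.1 h2.1
    exact (h2.2 rfl (f x) j).trans (h1.2 rfl x j)

theorem minus_section {m n : ℕ} {f : Cube m → Cube n} (hf : IsMinus f) :
    ∃ s : Cube n → Cube m, IsBoxMap s ∧ f ∘ s = id := by
  induction hf with
  | id => exact ⟨_, .id, rfl⟩
  | degen i => exact ⟨_, .face i true, degen_face_self i true⟩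
  | conn i ε => exact ⟨_, .face i.castSucc (!ε), conn_face_id i _ ε (Or.inl rfl)⟩
  | @comp _ _ _ f g _ _ h1 h2 =>
    obtain ⟨s1, b1, e1⟩ := h1
    obtain ⟨s2, b2, e2⟩ := h2
    refine ⟨s1 ∘ s2, .comp b2 b1, ?_⟩
    funext x
    have := congrFun e1 (s2 x)
    have h' := congrFun e2 x
    simp only [Function.comp, id] at this h' ⊢
    rw [this, h']

theorem fc_retract {m n : ℕ} {f : Cube m → Cube n} (hf : IsFaceComposite f) :
    ∃ r : Cube n → Cube m, IsMinus r ∧ r ∘ f = id := by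
  induction hf with
  | id => exact ⟨_, .id, rfl⟩
  | face i ε => exact ⟨_, .degen i, degen_face_self i ε⟩
  | @comp _ _ _ f g _ _ h1 h2 =>
    obtain ⟨s1, b1, e1⟩ := h1
    obtain ⟨s2, b2, e2⟩ := h2
    refine ⟨s1 ∘ s2, .comp b2 b1, ?_⟩
    funext x
    have := congrFun e2 (f x)
    have h' := congrFun e1 x
    simp only [Function.comp, id] at this h' ⊢
    rw [this, h']

theorem cube_card_le {m n : ℕ} (f : Cube m → Cube n) (hf : Function.Injective f) : m ≤ n := by
  have h := Fintype.card_le_of_injective (α := Fin m → Bool) (β := Fin n → Bool) f hf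
  simp only [Fintype.card_fun, Fintype.card_bool, Fintype.card_fin] at h
  exact (Nat.pow_le_pow_iff_right (by norm_num)).1 h

theorem box_bij {n : ℕ} {u : Cube n → Cube n} (hu : IsBoxMap u) (hi : Function.Injective u) :
    u = id := by
  obtain ⟨k, g, h, a, b, rfl⟩ := box_factor hu
  obtain rfl : k = n := le_antisymm (minus_deg a).1 (cube_card_le g hi.of_comp)
  funext x; apply cube_ext; intro j
  exact ((fc_deg b).2 rfl _ _).trans ((minus_deg a).2 rfl _ _)

theorem factor_unique {m n k k' : ℕ} {g : Cube m → Cube k} {h : Cube k → Cube n}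
    {g' : Cube m → Cube k'} {h' : Cube k' → Cube n} (hg : IsMinus g) (hh : IsFaceComposite h)
    (hg' : IsMinus g') (hh' : IsFaceComposite h') (e : h ∘ g = h' ∘ g') :
    k = k' ∧ HEq g g' ∧ HEq h h' := by
  obtain ⟨s, -, es⟩ := minus_section hg
  obtain ⟨s', -, es'⟩ := minus_section hg'
  obtain ⟨r, br, er⟩ := fc_retract hh
  obtain ⟨r', br', er'⟩ := fc_retract hh'
  have es := fun x => congrFun es x
  have es' := fun x => congrFun es' x
  have er := fun x => congrFun er x
  have er' := fun x => congrFun er' x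
  have e := fun x => congrFun e x
  simp only [Function.comp, id] at es es' er er' e
  have H : ∀ z, h' (r' (h z)) = h z := by
    intro z
    have h1 : h z = h' (g' (s z)) := by rw [← e, es]
    rw [h1, er']
  have H' : ∀ z, h (r (h' z)) = h' z := by
    intro z
    have h1 : h' z = h (g (s' z)) := by rw [e, es']
    rw [h1, er]
  have hi : Function.Injective (r' ∘ h) := by
    intro x y hxy
    have h2 := congrArg h' hxy
    simp only [Function.comp, H] at h2
    rw [← er x, h2, er]
  have hi' : Function.Injective (r ∘ h') := by
    intro x y hxy
    have h2 := congrArg h hxy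
    simp only [Function.comp, H'] at h2
    rw [← er' x, h2, er']
  obtain rfl : k = k' := le_antisymm (cube_card_le _ hi) (cube_card_le _ hi')
  have hid := box_bij (IsBoxMap.comp hh.box br'.box) hi
  have hid := fun x => congrFun hid x
  simp only [Function.comp, id] at hid
  have hhh : h = h' := by
    funext z
    rw [← H z, hid]
  subst hhh
  refine ⟨rfl, heq_of_eq ?_, HEq.rfl⟩
  funext x
  rw [← er (g x), e, er]

def upd {m : ℕ} (x : Cube m) (i : Fin m) (b : Bool) : Cube m := fun k => if k = i then b else x k

def Infl {m n : ℕ} (f : Cube m → Cube n) (i : Fin m) (j : Fin n) : Prop :=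
  ∃ (x : Cube m) (b : Bool), f (upd x i b) j ≠ f x j

structure Good {m n : ℕ} (f : Cube m → Cube n) : Prop where
  mono : ∀ x y : Cube m, (∀ i, x i = true → y i = true) → ∀ j, f x j = true → f y j = true
  pres : ∀ b : Bool, f (cst m b) = cst n b
  ord : ∀ i j i' j', Infl f i j → Infl f i' j' → i ≤ i' → j ≤ j'

theorem infl_degen {n : ℕ} {i : Fin (n + 1)} {k : Fin (n + 1)} {j : Fin n}
    (h : Infl (degen i) k j) : k.val = if j.val < i.val then j.val else j.val + 1 := by
  obtain ⟨x, b, h⟩ := h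
  simp only [degen_apply', upd] at h
  grind

theorem infl_conn {n : ℕ} {i : Fin (n + 1)} {ε : Bool} {k : Fin (n + 2)} {j : Fin (n + 1)}
    (h : Infl (conn i ε) k j) : (j.val < i.val → k.val = j.val) ∧
      (j.val = i.val → k.val = i.val ∨ k.val = i.val + 1) ∧ (i.val < j.val → k.val = j.val + 1) := by
  obtain ⟨x, b, h⟩ := h
  simp only [conn_apply', upd] at h
  grind

theorem infl_comp {l m n : ℕ} {f : Cube l → Cube m} {g : Cube m → Cube n} (hf : Good f)
    {i : Fin l} {j : Fin n} (h : Infl (g ∘ f) i j) : ∃ k, Infl f i k ∧ Infl g k j := by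
  obtain ⟨x, b, h⟩ := h
  have h1 : ∃ k, f (upd x i b) k ≠ f x k := by
    by_contra! hc
    exact h (by simp only [Function.comp]; rw [cube_ext hc])
  obtain ⟨k, hk⟩ := h1
  refine ⟨k, ⟨x, b, hk⟩, f x, f (upd x i b) k, ?_⟩
  have : upd (f x) k (f (upd x i b) k) = f (upd x i b) := by
    apply cube_ext; intro k'
    unfold upd
    split_ifs with h2
    · rw [h2]
    · by_contra h3
      have h3 : Infl f i k' := ⟨x, b, fun h4 => h3 h4.symm⟩
      exact h2 (le_antisymm (hf.ord _ _ _ _ h3 ⟨x, b, hk⟩ le_rfl)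
        (hf.ord _ _ _ _ ⟨x, b, hk⟩ h3 le_rfl))
  rw [this]
  exact h

theorem minus_good {m n : ℕ} {f : Cube m → Cube n} (hf : IsMinus f) : Good f := by
  induction hf with
  | id =>
    refine ⟨fun x y h => h, fun _ => rfl, ?_⟩
    rintro i j i' j' ⟨x, b, h⟩ ⟨x', b', h'⟩ hl
    simp only [upd] at h h'
    grind
  | degen i =>
    refine ⟨fun x y h j => h _, fun _ => rfl, ?_⟩
    intro k j k' j' h h' hl
    have := infl_degen h
    have := infl_degen h'
    rw [Fin.le_def] at hl ⊢
    grind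
  | conn i ε =>
    refine ⟨fun x y h j => ?_, fun b => ?_, ?_⟩
    · simp only [conn_apply']
      have h1 := h ⟨i.val, by omega⟩
      have h2 := h ⟨i.val + 1, by omega⟩
      have h3 := h ⟨j.val, by omega⟩
      have h4 := h ⟨j.val + 1, by omega⟩
      grind
    · apply cube_ext; intro j
      simp only [conn_apply', cst_apply]
      cases b <;> cases ε <;> simp
    intro k j k' j' h h' hl
    have := infl_conn h
    have := infl_conn h'
    rw [Fin.le_def] at hl ⊢
    omega
  | @comp _ _ _ f g _ _ h1 h2 =>
    refine ⟨fun x y h j => h2.mono _ _ (fun i => h1.mono _ _ h i) j, fun b => ?_, ?_⟩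
    · simp only [Function.comp, h1.pres, h2.pres]
    intro i j i' j' h h' hl
    obtain ⟨k, a, b⟩ := infl_comp h1 h
    obtain ⟨k', a', b'⟩ := infl_comp h1 h'
    exact h2.ord _ _ _ _ b b' (h1.ord _ _ _ _ a a' hl)

theorem infl_agree {m n : ℕ} (f : Cube m → Cube n) (j : Fin n) (x y : Cube m)
    (h : ∀ i, Infl f i j → x i = y i) : f x j = f y j := by
  have key : ∀ S : Finset (Fin m), f (fun k => if k ∈ S then y k else x k) j = f x j := by
    intro S
    induction S using Finset.induction_on with
    | empty => simp
    | insert a S ha ih =>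
      rw [← ih]
      have e : (fun k => if k ∈ insert a S then y k else x k : Cube m)
          = upd (fun k => if k ∈ S then y k else x k) a (y a) := by
        apply cube_ext; intro k; simp only [upd, Finset.mem_insert]; grind
      rw [e]
      by_cases hI : Infl f a j
      · congr 1
        apply cube_ext; intro k; simp only [upd]
        have := h a hI
        grind
      · by_contra hc
        exact hI ⟨_, _, hc⟩
  have := key Finset.univ
  simp only [Finset.mem_univ, if_true] at this
  exact this.symm

theorem exists_infl {m n : ℕ} {f : Cube m → Cube n} (hf : Good f) (j : Fin n) :
    ∃ i, Infl f i j := by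
  by_contra! hc
  have h := infl_agree f j (cst m false) (cst m true) (fun i hi => absurd hi (hc i))
  rw [hf.pres, hf.pres] at h
  simp [cst_apply] at h

theorem embed_fc {n : ℕ} : ∀ {m : ℕ} (s : Cube n → Cube m) (p : Fin n → Fin m), StrictMono p →
    (∀ z j, s z (p j) = z j) → (∀ k, (∀ j, p j ≠ k) → ∀ z z', s z k = s z' k) →
    IsFaceComposite s := by
  intro m
  induction m with
  | zero =>
    intro s p hp h1 h2
    obtain _ | n := n
    · have : s = fun x => x := by
        funext x; apply cube_ext; intro j; exact j.elim0
      rw [this]; exact .id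
    · exact (p 0).elim0
  | succ m ih =>
    intro s p hp h1 h2
    by_cases hs : Function.Surjective p
    · have hc := Fintype.card_of_bijective ⟨hp.injective, hs⟩
      simp only [Fintype.card_fin] at hc
      subst hc
      have hpid : p = id := by
        apply (hp.range_inj strictMono_id).1
        rw [hs.range_eq, Set.range_id]
      subst hpid
      have : s = fun x => x := by
        funext x; apply cube_ext; intro j; exact h1 x j
      rw [this]; exact .id
    · have hs' : ∃ q, ∀ j, p j ≠ q := by
        simpa [Function.Surjective] using hs
      obtain ⟨q, hq⟩ := hs'
      have : ∀ j, ∃ k, q.succAbove k = p j := fun j => Fin.exists_succAbove_eq (hq j)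
      choose p' hp' using this
      have hfc : IsFaceComposite (degen q ∘ s) := by
        apply ih (degen q ∘ s) p'
        · intro a b hab
          have := hp hab
          rw [← hp', ← hp'] at this
          exact (Fin.strictMono_succAbove q).lt_iff_lt.1 this
        · intro z j
          simp only [Function.comp, degen, hp', h1]
        · intro k hk z z'
          simp only [Function.comp, degen]
          apply h2
          intro j hj
          rw [← hp'] at hj
          exact hk j (Fin.succAbove_right_injective hj)
      have e : s = face q (s (cst n false) q) ∘ (degen q ∘ s) := by
        funext z; apply cube_ext; intro k
        rcases Fin.eq_self_or_eq_succAbove q k with rfl | ⟨k, rfl⟩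
        · simp only [Function.comp, face_same]
          exact h2 _ hq _ _
        · simp only [Function.comp, face_succAbove, degen]
      rw [e]
      exact .comp hfc (.face _ _)

/-- any pivotal edge extends to a section -/
theorem exists_section {m n : ℕ} {f : Cube m → Cube n} (hf : Good f) (x : Cube m) (i : Fin m)
    (j : Fin n) (b : Bool) (h : f (upd x i b) j ≠ f x j) :
    ∃ s : Cube n → Cube m, IsBoxMap s ∧ f ∘ s = id ∧
      (∀ z b, s (upd z j b) = upd (s z) i b) ∧
      (∀ z k, Infl f k j → s z k = upd x i (z j) k) := by
  have h0 : ∀ j', ∃ (i' : Fin m) (x' : Cube m) (b' : Bool), f (upd x' i' b') j' ≠ f x' j' ∧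
      (j' = j → i' = i ∧ x' = x) := by
    intro j'
    by_cases hj : j' = j
    · subst hj; exact ⟨i, x, b, h, fun _ => ⟨rfl, rfl⟩⟩
    · obtain ⟨i', x', b', h'⟩ := exists_infl hf j'
      exact ⟨i', x', b', h', fun h => absurd h hj⟩
  choose p y c hp hpj using h0
  have hI : ∀ j', Infl f (p j') j' := fun j' => ⟨_, _, hp j'⟩
  have huniq : ∀ k j1 j2, Infl f k j1 → Infl f k j2 → j1 = j2 := fun k j1 j2 h1 h2 =>
    le_antisymm (hf.ord _ _ _ _ h1 h2 le_rfl) (hf.ord _ _ _ _ h2 h1 le_rfl)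
  have hsm : StrictMono p := by
    intro a b' hab
    by_contra hc
    exact absurd (hf.ord _ _ _ _ (hI b') (hI a) (not_lt.1 hc)) (not_le.2 hab)
  have hval : ∀ j' v, f (upd (y j') (p j') v) j' = v := by
    intro j' v
    have hm : f (upd (y j') (p j') false) j' = true → f (upd (y j') (p j') true) j' = true := by
      apply hf.mono
      intro k; simp only [upd]; grind
    have h1 := hp j'
    have h2 : y j' = upd (y j') (p j') (y j' (p j')) := by
      apply cube_ext; intro k; simp only [upd]; grind
    rw [h2] at h1
    have h3 : upd (upd (y j') (p j') (y j' (p j'))) (p j') (c j') = upd (y j') (p j') (c j') := by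
      apply cube_ext; intro k; simp only [upd]; grind
    rw [h3] at h1
    generalize c j' = c1 at h1
    clear h2 h3
    generalize y j' (p j') = c2 at h1
    clear hI hsm huniq hp hpj
    cases c1 <;> cases c2 <;> cases v <;> clear h <;> simp only [ne_eq, not_true_eq_false] at h1 <;> grind
  classical
  let s : Cube n → Cube m := fun z k =>
    if hk : ∃ j', Infl f k j' then upd (y hk.choose) (p hk.choose) (z hk.choose) k else false
  have hs : ∀ z k j', Infl f k j' → s z k = upd (y j') (p j') (z j') k := by
    intro z k j' hk
    have hk' : ∃ j', Infl f k j' := ⟨j', hk⟩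
    have e : hk'.choose = j' := huniq k _ _ hk'.choose_spec hk
    simp only [s, dif_pos hk', e]
  have hs0 : ∀ z k, (¬ ∃ j', Infl f k j') → s z k = false := by
    intro z k hk
    simp only [s, dif_neg hk]
  refine ⟨s, ?_, ?_, ?_, ?_⟩
  · apply IsFaceComposite.box
    apply embed_fc s p hsm
    · intro z j'
      rw [hs z _ j' (hI j')]; simp [upd]
    · intro k hk z z'
      by_cases hk' : ∃ j', Infl f k j'
      · obtain ⟨j', hk'⟩ := hk'
        rw [hs z _ j' hk', hs z' _ j' hk']
        simp [upd, (hk j').symm]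
      · rw [hs0 _ _ hk', hs0 _ _ hk']
  · funext z; apply cube_ext; intro j'
    simp only [Function.comp, id]
    rw [infl_agree f j' (s z) _ (fun k hk => hs z k j' hk), hval]
  · intro z b
    apply cube_ext; intro k
    have hpi := (hpj j rfl).1
    by_cases hk' : ∃ j', Infl f k j'
    · obtain ⟨j', hk'⟩ := hk'
      rw [hs _ _ j' hk']
      simp only [upd]
      rw [hs _ _ j' hk']
      simp only [upd]
      have := hsm.injective.eq_iff (a := j') (b := j)
      have h5 := huniq k j' j hk'
      have h6 := hI j
      grind
    · rw [hs0 _ _ hk']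
      have : k ≠ i := by
        rintro rfl; exact hk' ⟨j, hpi ▸ hI j⟩
      simp only [upd, if_neg this]
      rw [hs0 _ _ hk']
  · intro z k hk
    rw [hs z k j hk, (hpj j rfl).1, (hpj j rfl).2]

theorem infl_transfer {m n : ℕ} {f g : Cube m → Cube n} (hf : Good f)
    (H : ∀ s : Cube n → Cube m, IsBoxMap s → f ∘ s = id → g ∘ s = id) {i : Fin m} {j : Fin n}
    (h : Infl f i j) : Infl g i j := by
  obtain ⟨x, b, h⟩ := h
  obtain ⟨s, hs, e, h1, -⟩ := exists_section hf x i j b h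
  have e' := fun z => congrFun (H s hs e) z
  simp only [Function.comp, id] at e'
  refine ⟨s (cst n false), true, ?_⟩
  rw [← h1, e', e']
  simp [upd, cst_apply]

theorem edge_transfer {m n : ℕ} {f g : Cube m → Cube n} (hf : Good f)
    (H : ∀ s : Cube n → Cube m, IsBoxMap s → f ∘ s = id → g ∘ s = id)
    (HI : ∀ i j, Infl g i j → Infl f i j) (x : Cube m) (i : Fin m) (j : Fin n) (b : Bool)
    (h : f (upd x i b) j ≠ f x j) : g (upd x i b) j ≠ g x j := by
  obtain ⟨s, hs, e, -, h2⟩ := exists_section hf x i j b h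
  have e' := fun z => congrFun (H s hs e) z
  simp only [Function.comp, id] at e'
  have hv : ∀ v, g (upd x i v) j = v := by
    intro v
    have := infl_agree g j (s (cst n v)) _ (fun k hk => h2 _ k (HI _ _ hk))
    rw [e'] at this
    exact this.symm
  have hx : upd x i (x i) = x := by
    apply cube_ext; intro k; simp only [upd]; grind
  have hx2 := hv (x i)
  rw [hx] at hx2
  rw [hv, hx2]
  rintro rfl
  rw [hx] at h
  exact h rfl

theorem minus_ext {m n : ℕ} {f g : Cube m → Cube n} (hf : Good f) (hg : Good g)
    (H : ∀ s : Cube n → Cube m, IsBoxMap s → (f ∘ s = id ↔ g ∘ s = id)) : f = g := by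
  have H1 : ∀ s : Cube n → Cube m, IsBoxMap s → f ∘ s = id → g ∘ s = id :=
    fun s hs => (H s hs).1
  have H2 : ∀ s : Cube n → Cube m, IsBoxMap s → g ∘ s = id → f ∘ s = id :=
    fun s hs => (H s hs).2
  have E1 := edge_transfer hf H1 (fun i j h => infl_transfer hg H2 h)
  have E2 := edge_transfer hg H2 (fun i j h => infl_transfer hf H1 h)
  funext x; apply cube_ext; intro j
  have key : ∀ S : Finset (Fin m), f (fun k => if k ∈ S then x k else false) j
      = g (fun k => if k ∈ S then x k else false) j := by
    intro S
    induction S using Finset.induction_on with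
    | empty =>
      have e0 : (fun k => if k ∈ (∅ : Finset (Fin m)) then x k else false : Cube m) = cst m false := by
        apply cube_ext; intro k; simp [cst_apply]
      rw [e0, hf.pres, hg.pres]
    | insert a S ha ih =>
      have e : (fun k => if k ∈ insert a S then x k else false : Cube m)
          = upd (fun k => if k ∈ S then x k else false) a (x a) := by
        apply cube_ext; intro k; simp only [upd, Finset.mem_insert]; grind
      rw [e]
      have e1 := E1 (fun k => if k ∈ S then x k else false) a j (x a)
      have e2 := E2 (fun k => if k ∈ S then x k else false) a j (x a)
      generalize f (upd (fun k => if k ∈ S then x k else false) a (x a)) j = b1 at *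
      generalize g (upd (fun k => if k ∈ S then x k else false) a (x a)) j = b2 at *
      generalize f (fun k => if k ∈ S then x k else false) j = b3 at *
      generalize g (fun k => if k ∈ S then x k else false) j = b4 at *
      clear E1 E2 H1 H2 H
      revert b1 b2 b3 b4
      decide
  have := key Finset.univ
  simpa only [Finset.mem_univ, if_true] using this

/-- The box category `□` is an EZ Reedy category: with degree `deg [1]^n = n`, every morphism
factors uniquely as a map of `□₋` (generated by degeneracies and connections, strictly lowering
the degree when not an identity) followed by a map of `□₊` (generated by faces, strictly raising
the degree when not an identity); moreover every morphism of `□₋` is a split epimorphism and is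
determined by its set of sections. -/
theorem box_is_EZ_reedy :
    (∀ {m n : ℕ} (f : Cube m → Cube n), IsBoxMap f →
      ∃ (k : ℕ) (g : Cube m → Cube k) (h : Cube k → Cube n),
        IsMinus g ∧ IsFaceComposite h ∧ f = h ∘ g ∧
        (∀ (k' : ℕ) (g' : Cube m → Cube k') (h' : Cube k' → Cube n),
          IsMinus g' → IsFaceComposite h' → f = h' ∘ g' →
          k = k' ∧ HEq g g' ∧ HEq h h')) ∧
    (∀ {m n : ℕ} (f : Cube m → Cube n), IsMinus f →
      (n ≤ m ∧ (∀ h : m = n, ∀ (x : Cube m) (j : Fin n), f x j = x (Fin.cast h.symm j)))) ∧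
    (∀ {m n : ℕ} (f : Cube m → Cube n), IsFaceComposite f →
      (m ≤ n ∧ (∀ h : m = n, ∀ (x : Cube m) (j : Fin n), f x j = x (Fin.cast h.symm j)))) ∧
    (∀ {m n : ℕ} (f : Cube m → Cube n), IsMinus f →
      (∃ s : Cube n → Cube m, IsBoxMap s ∧ f ∘ s = id) ∧
      (∀ g : Cube m → Cube n, IsMinus g →
        (∀ s : Cube n → Cube m, IsBoxMap s → (f ∘ s = id ↔ g ∘ s = id)) → f = g)) := by
  refine ⟨?_, fun f hf => minus_deg hf, fun f hf => fc_deg hf, fun f hf =>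
    ⟨minus_section hf, fun g hg H => minus_ext (minus_good hf) (minus_good hg) H⟩⟩
  intro m n f hf
  obtain ⟨k, g, h, a, b, c⟩ := box_factor hf
  exact ⟨k, g, h, a, b, c, fun k' g' h' a' b' c' => factor_unique a b a' b' (c.symm.trans c')⟩
end
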